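/- Let q be a power of an odd prime and let u be an integer with 1 ≤ u < q²−1 such that q−1 does not divide u and q+1 does not divide u. Then the induced character χ := Ind_B^{SU_3(q)} θ_u is an irreducible complex character of SU_3(q) of degree q³+1 whose character field is not contained in ℝ, and χ has unitary discriminant −q^{u+1}·f(u) if q ≡ 1 (mod 4) and q^{u+1}·f(u) if q ≡ 3 (mod 4), where f(u) := −(δ^{(q+1)u} − δ^{−(q+1)u})² if (q−1)/2 does not divide u, and f(u) := −(δ^{u} + δ^{qu})² if (q−1)/2 divides u. -/

import Mathlib

open Matrix

noncomputable section

namespace Paper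

/-- The character of a matrix representation. -/
def charOf {G : Type} [Group G] {n : ℕ} (ρ : G →* GL (Fin n) ℂ) : G → ℂ :=
  fun g => Matrix.trace ((ρ g : Matrix (Fin n) (Fin n) ℂ))

/-- Irreducibility of a complex matrix representation. -/
def IsIrredRep {G : Type} [Group G] {n : ℕ} (ρ : G →* GL (Fin n) ℂ) : Prop :=
  0 < n ∧ ∀ W : Submodule ℂ (Fin n → ℂ),
    (∀ (g : G), ∀ v ∈ W, (ρ g : Matrix (Fin n) (Fin n) ℂ).mulVec v ∈ W) → W = ⊥ ∨ W = ⊤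

/-- `χ` is an irreducible complex character of `G`. -/
def IsIrrChar {G : Type} [Group G] (χ : G → ℂ) : Prop :=
  ∃ (n : ℕ) (ρ : G →* GL (Fin n) ℂ), IsIrredRep ρ ∧ χ = charOf ρ

/-- The character field `ℚ(χ)`, as a subfield of `ℂ`. -/
def charField {G : Type} [Group G] (χ : G → ℂ) : Subfield ℂ :=
  Subfield.closure (Set.range χ)

/-- The subfield of real numbers inside `ℂ`. -/
def realsIn : Subfield ℂ := Subfield.closure (Set.range ((↑) : ℝ → ℂ))

/-- The character field of `χ` is not contained in `ℝ`. -/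
def NotReal {G : Type} [Group G] (χ : G → ℂ) : Prop := ¬ charField χ ≤ realsIn

/-- `χ` has unitary discriminant `d`. -/
def HasUnitaryDisc {G : Type} [Group G] (χ : G → ℂ) (d : ℂ) : Prop :=
  ∀ (n : ℕ) (ρ : G →* GL (Fin n) ℂ),
    χ = charOf ρ →
    (∀ g i j, ((ρ g : Matrix (Fin n) (Fin n) ℂ)) i j ∈ charField χ) →
    ∀ H : Matrix (Fin n) (Fin n) ℂ,
      (∀ i j, H i j ∈ charField χ) →
      IsUnit H.det →
      H.conjTranspose = H →
      (∀ g, ((ρ g : Matrix (Fin n) (Fin n) ℂ)).conjTranspose * H *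
        (ρ g : Matrix (Fin n) (Fin n) ℂ) = H) →
      ∃ z ∈ charField χ, z ≠ 0 ∧
        (-1 : ℂ) ^ (n * (n - 1) / 2) * H.det = d * (z * (starRingEnd ℂ) z)

/-- `χ` has orthogonal discriminant `d`. -/
def HasOrthDisc {G : Type} [Group G] (χ : G → ℂ) (d : ℂ) : Prop :=
  ∀ (n : ℕ) (ρ : G →* GL (Fin n) ℂ),
    χ = charOf ρ →
    (∀ g i j, ((ρ g : Matrix (Fin n) (Fin n) ℂ)) i j ∈ charField χ) →
    ∀ H : Matrix (Fin n) (Fin n) ℂ,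
      (∀ i j, H i j ∈ charField χ) →
      IsUnit H.det →
      H.transpose = H →
      (∀ g, ((ρ g : Matrix (Fin n) (Fin n) ℂ)).transpose * H *
        (ρ g : Matrix (Fin n) (Fin n) ℂ) = H) →
      ∃ z ∈ charField χ, z ≠ 0 ∧
        (-1 : ℂ) ^ (n * (n - 1) / 2) * H.det = d * z ^ 2

/-- `χ` is a rational character. -/
def IsRationalChar {G : Type} [Group G] (χ : G → ℂ) : Prop :=
  ∀ g, ∃ r : ℚ, χ g = (r : ℂ)

/-- `χ` is the character of a representation over `ℚ`. -/
def RealizableOverQ {G : Type} [Group G] (χ : G → ℂ) : Prop :=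
  ∃ (n : ℕ) (ρ : G →* GL (Fin n) ℂ), χ = charOf ρ ∧
    ∀ g i j, ∃ r : ℚ, ((ρ g : Matrix (Fin n) (Fin n) ℂ)) i j = (r : ℂ)

end Paper

namespace Paper

variable (p k : ℕ) (F : Type) [Field F] [Fintype F] [ExpChar F p]

/-- The Gram matrix `Ω` (anti-diagonal ones). -/
def Om : Matrix (Fin 3) (Fin 3) F :=
  Matrix.of fun i j => if (i : ℕ) + (j : ℕ) = 2 then 1 else 0

/-- Entrywise `q`-power Frobenius `Φ` on `3×3` matrices, where `q = p^k`. -/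
def Phi : Matrix (Fin 3) (Fin 3) F →+* Matrix (Fin 3) (Fin 3) F :=
  (iterateFrobenius F p k).mapMatrix

/-- The special unitary group `SU₃(q) = {g ∈ SL₃(F_{q²}) : Φ(g)ᵀ·Ω·g = Ω}`. -/
def SU3 : Subgroup (Matrix.SpecialLinearGroup (Fin 3) F) where
  carrier := {g | (Phi p k F g.val)ᵀ * Om F * g.val = Om F}
  one_mem' := by
    show (Phi p k F (1 : Matrix.SpecialLinearGroup (Fin 3) F).val)ᵀ * Om F *
        (1 : Matrix.SpecialLinearGroup (Fin 3) F).val = Om F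
    simp
  mul_mem' := by
    intro a b ha hb
    show (Phi p k F (a.val * b.val))ᵀ * Om F * (a.val * b.val) = Om F
    have ha' : (Phi p k F a.val)ᵀ * Om F * a.val = Om F := ha
    have hb' : (Phi p k F b.val)ᵀ * Om F * b.val = Om F := hb
    calc (Phi p k F (a.val * b.val))ᵀ * Om F * (a.val * b.val)
        = (Phi p k F b.val)ᵀ * ((Phi p k F a.val)ᵀ * Om F * a.val) * b.val := by
          rw [_root_.map_mul, Matrix.transpose_mul]; simp only [Matrix.mul_assoc]
      _ = (Phi p k F b.val)ᵀ * Om F * b.val := by rw [ha']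
      _ = Om F := hb'
  inv_mem' := by
    intro a ha
    show (Phi p k F (a⁻¹).val)ᵀ * Om F * (a⁻¹).val = Om F
    have ha' : (Phi p k F a.val)ᵀ * Om F * a.val = Om F := ha
    have h1 : a.val * (a⁻¹).val = 1 := by
      rw [← Matrix.SpecialLinearGroup.coe_mul, mul_inv_cancel,
        Matrix.SpecialLinearGroup.coe_one]
    nth_rewrite 1 [← ha']
    calc (Phi p k F (a⁻¹).val)ᵀ * ((Phi p k F a.val)ᵀ * Om F * a.val) * (a⁻¹).val
        = (Phi p k F a.val * Phi p k F (a⁻¹).val)ᵀ * Om F * (a.val * (a⁻¹).val) := by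
          rw [Matrix.transpose_mul]; simp only [Matrix.mul_assoc]
      _ = Om F := by rw [← _root_.map_mul, h1, _root_.map_one, Matrix.transpose_one,
            Matrix.one_mul, Matrix.mul_one]

end Paper

namespace Paper

variable (p k : ℕ) (F : Type) [Field F] [Fintype F] [ExpChar F p]

/-- The Borel subgroup of `SU₃(q)`: the upper triangular matrices in `SU₃(q)`. -/
def Borel : Subgroup ↥(SU3 p k F) where
  carrier := {g | Matrix.BlockTriangular ((g : Matrix.SpecialLinearGroup (Fin 3) F) :
    Matrix (Fin 3) (Fin 3) F) id}
  one_mem' := by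
    show Matrix.BlockTriangular ((1 : Matrix.SpecialLinearGroup (Fin 3) F) :
      Matrix (Fin 3) (Fin 3) F) id
    rw [Matrix.SpecialLinearGroup.coe_one]
    exact Matrix.blockTriangular_one
  mul_mem' := by
    intro a b ha hb
    exact Matrix.BlockTriangular.mul ha hb
  inv_mem' := by
    intro a ha
    show Matrix.BlockTriangular (((a⁻¹ : ↥(SU3 p k F)) : Matrix.SpecialLinearGroup (Fin 3) F) :
      Matrix (Fin 3) (Fin 3) F) id
    have hcoe : (((a⁻¹ : ↥(SU3 p k F)) : Matrix.SpecialLinearGroup (Fin 3) F) :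
        Matrix (Fin 3) (Fin 3) F)
        = (((a : ↥(SU3 p k F)) : Matrix.SpecialLinearGroup (Fin 3) F) :
          Matrix (Fin 3) (Fin 3) F)⁻¹ := by
      rw [show ((a⁻¹ : ↥(SU3 p k F)) : Matrix.SpecialLinearGroup (Fin 3) F)
        = ((a : ↥(SU3 p k F)) : Matrix.SpecialLinearGroup (Fin 3) F)⁻¹ from rfl]
      rw [Matrix.SpecialLinearGroup.coe_inv, Matrix.inv_def,
        ((a : ↥(SU3 p k F)) : Matrix.SpecialLinearGroup (Fin 3) F).2]
      simp
    rw [hcoe]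
    haveI : Invertible (((a : ↥(SU3 p k F)) : Matrix.SpecialLinearGroup (Fin 3) F) :
        Matrix (Fin 3) (Fin 3) F) := by
      apply Matrix.invertibleOfIsUnitDet
      rw [((a : ↥(SU3 p k F)) : Matrix.SpecialLinearGroup (Fin 3) F).2]
      exact isUnit_one
    exact Matrix.blockTriangular_inv_of_blockTriangular ha

end Paper

namespace Paper

open scoped Classical in
/-- The character of `G` induced from a character `ψ` of the subgroup `U`. -/
def inducedChar {G : Type} [Group G] (U : Subgroup G) (ψ : ↥U → ℂ) : G → ℂ :=
  fun g => (Nat.card ↥U : ℂ)⁻¹ *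
    ∑ᶠ x : G, if h : x⁻¹ * g * x ∈ U then ψ (⟨x⁻¹ * g * x, h⟩ : ↥U) else 0

/-!
Over a cyclotomic field `M`, `χ` is the trace of a monomial representation `ρ` on the `q ^ 3 + 1`
isotropic lines, twisted by `θ = ν ^ u`. Evaluating `θ` at the pairing of two lines gives a kernel
that intertwines `ρ` with its conjugate under the involution `τ : θ x ↦ (θ x ^ q)⁻¹` of `M`, whose
fixed field turns out to be `ℚ(χ)`. Divided by a suitable combination of Fourier coefficients and
Gauss sums, the kernel becomes a unitary matrix `B`.

A representation over `ℚ(χ)` with character `χ` is `P ρ P⁻¹` for some `P`, normalised by Hilbert 90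
to satisfy `τ P * B = P`. Its invariant Hermitian forms pull back to scalar multiples of the
identity, so their determinants are known up to norms once one solves `det B * τ w = w`; the
discriminant is, up to sign, the class of `w * star w`. Diagonalising the kernel by Fourier
transforms over the unipotent radical exhibits `det B` as `-v / τ v` with
`v * star v = q ^ (u - 3)`, so that `w = z * v` will do for any `z` negated by `τ`; a `z` that
complex conjugation also negates accounts for the factor `f(u) = -z ^ 2`.
-/

/-! ### Matrix representations with scalar commutant -/

section Commutant

variable {G M n m : Type*} [Group G] [Fintype G] [Field M] [Fintype n] [DecidableEq n]
  [Fintype m] [DecidableEq m]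

/-- The conclusion of Schur's lemma for a matrix representation: only scalar matrices commute
with it. -/
def HasScalarCommutant {G M n : Type*} [Group G] [Field M] [Fintype n] [DecidableEq n]
    (ρ : G →* Matrix n n M) : Prop :=
  ∀ C : Matrix n n M, (∀ g, C * ρ g = ρ g * C) → ∃ c : M, C = c • 1

/-- The (unnormalised) average of `C` over the group, which intertwines `ρ` and `ρ'`. -/
def averageHom (ρ' : G →* Matrix m m M) (ρ : G →* Matrix n n M) (C : Matrix m n M) :
    Matrix m n M :=
  ∑ g, ρ' g * C * ρ g⁻¹

lemma averageHom_mul (ρ' : G →* Matrix m m M) (ρ : G →* Matrix n n M) (C : Matrix m n M) (g : G) :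
    averageHom ρ' ρ C * ρ g = ρ' g * averageHom ρ' ρ C := by
  rw [averageHom, Matrix.sum_mul, Matrix.mul_sum, ← Equiv.sum_comp (Equiv.mulLeft g)]
  refine Finset.sum_congr rfl fun x _ ↦ ?_
  simp only [Equiv.coe_mulLeft, _root_.mul_inv_rev, map_mul, Matrix.mul_assoc]
  rw [← map_mul ρ g⁻¹ g, inv_mul_cancel, map_one, Matrix.mul_one]

lemma sum_averageHom_single (ρ' : G →* Matrix m m M) (ρ : G →* Matrix n n M) :
    ∑ i, ∑ j, averageHom ρ' ρ (Matrix.single i j 1) i j = ∑ g, (ρ' g).trace * (ρ g⁻¹).trace := by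
  have hentry (A : Matrix m m M) (B : Matrix n n M) (i : m) (j : n) :
      (A * Matrix.single i j (1 : M) * B : Matrix m n M) i j = A i i * B j j := by
    simp [Matrix.mul_apply, Matrix.single_apply, ite_and]
  simp only [averageHom, Matrix.sum_apply, hentry, Matrix.trace, Matrix.diag_apply,
    Finset.sum_mul_sum]
  exact (Finset.sum_congr rfl fun _ _ ↦ Finset.sum_comm).trans Finset.sum_comm

variable [CharZero M] {ρ : G →* Matrix n n M}

lemma HasScalarCommutant.sum_trace_mul_trace_inv [Nonempty n] (hρ : HasScalarCommutant ρ) :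
    ∑ g, (ρ g).trace * (ρ g⁻¹).trace = Fintype.card G := by
  have hn : (Fintype.card n : M) ≠ 0 := Nat.cast_ne_zero.mpr Fintype.card_ne_zero
  have hentry (i j : n) : averageHom ρ ρ (Matrix.single i j 1) i j =
      if i = j then (Fintype.card G : M) / Fintype.card n else 0 := by
    obtain ⟨c, hc⟩ := hρ _ (averageHom_mul ρ ρ (Matrix.single i j 1))
    have htrace : (averageHom ρ ρ (Matrix.single i j 1)).trace =
        if i = j then (Fintype.card G : M) else 0 := by
      simp only [averageHom, Matrix.trace_sum, Matrix.trace_mul_comm _ (ρ _⁻¹),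
        ← Matrix.mul_assoc, ← map_mul, inv_mul_cancel, map_one, Matrix.one_mul,
        Finset.sum_const, Finset.card_univ]
      split_ifs with h <;> simp [h]
    rw [hc, Matrix.trace_smul, Matrix.trace_one, smul_eq_mul, ← eq_div_iff hn] at htrace
    rw [hc, htrace]
    split_ifs with h <;> simp [h]
  rw [← sum_averageHom_single]
  simp only [hentry, Finset.sum_ite_eq, Finset.mem_univ, if_true, Finset.sum_const,
    Finset.card_univ, nsmul_eq_mul]
  field_simp

omit [Fintype G] in
lemma HasScalarCommutant.eq_bot_or_eq_top [Finite G] (hρ : HasScalarCommutant ρ)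
    (W : Submodule M (n → M)) (hW : ∀ g, ∀ v ∈ W, ρ g *ᵥ v ∈ W) : W = ⊥ ∨ W = ⊤ := by
  have := Fintype.ofFinite G
  obtain ⟨π, hπ⟩ := W.subtype.exists_leftInverse_of_injective W.ker_subtype
  set Q := averageHom ρ ρ (W.subtype ∘ₗ π).toMatrix' with hQ
  have hproj (v) : (W.subtype ∘ₗ π).toMatrix' *ᵥ v = π v := by
    simp [← Matrix.toLin'_apply]
  have hQ_mem (v) : Q *ᵥ v ∈ W := by
    simp only [hQ, averageHom, Matrix.sum_mulVec, ← Matrix.mulVec_mulVec, hproj]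
    exact W.sum_mem fun g _ ↦ hW g _ (π _).2
  have hQ_eq (v) (hv : v ∈ W) : Q *ᵥ v = (Fintype.card G : M) • v := by
    have hfix (g : G) : (π (ρ g⁻¹ *ᵥ v) : n → M) = ρ g⁻¹ *ᵥ v :=
      congrArg Subtype.val (LinearMap.congr_fun hπ ⟨_, hW g⁻¹ v hv⟩)
    simp only [hQ, averageHom, Matrix.sum_mulVec, ← Matrix.mulVec_mulVec, hproj, hfix]
    simp only [Matrix.mulVec_mulVec, ← map_mul, mul_inv_cancel, map_one, Matrix.one_mulVec,
      Finset.sum_const, Finset.card_univ, Nat.cast_smul_eq_nsmul]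
  obtain ⟨c, hc⟩ := hρ Q (averageHom_mul ρ ρ _)
  simp only [hc, Matrix.smul_mulVec, Matrix.one_mulVec] at hQ_mem hQ_eq
  refine or_iff_not_imp_left.mpr fun hbot ↦ ?_
  obtain ⟨v, hv, hv0⟩ := W.exists_mem_ne_zero_of_ne_bot hbot
  have hc0 : c ≠ 0 := by
    rw [smul_left_injective M hv0 (hQ_eq v hv)]
    exact Nat.cast_ne_zero.mpr Fintype.card_ne_zero
  exact eq_top_iff.mpr fun w _ ↦ (W.smul_mem_iff hc0).mp (hQ_mem w)

omit [Fintype G] in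
lemma HasScalarCommutant.exists_isUnit_intertwiner [Finite G] [Nonempty n]
    (hρ : HasScalarCommutant ρ) (R : G →* Matrix n n M) (htr : ∀ g, (R g).trace = (ρ g).trace) :
    ∃ P : Matrix n n M, IsUnit P ∧ ∀ g, R g * P = P * ρ g := by
  have := Fintype.ofFinite G
  obtain ⟨C, hC⟩ : ∃ C, averageHom R ρ C ≠ 0 := by
    by_contra! h
    have hsum := sum_averageHom_single R ρ
    simp only [h, htr, hρ.sum_trace_mul_trace_inv, Matrix.zero_apply, Finset.sum_const_zero] at hsum
    exact Nat.cast_ne_zero.mpr Fintype.card_ne_zero hsum.symm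
  refine ⟨averageHom R ρ C, ?_, fun g ↦ (averageHom_mul R ρ C g).symm⟩
  rw [← Matrix.mulVec_injective_iff_isUnit]
  have hker := hρ.eq_bot_or_eq_top (LinearMap.ker (averageHom R ρ C).mulVecLin) fun g v hv ↦ by
    rw [LinearMap.mem_ker, Matrix.mulVecLin_apply] at hv ⊢
    rw [Matrix.mulVec_mulVec, averageHom_mul, ← Matrix.mulVec_mulVec, hv, Matrix.mulVec_zero]
  refine LinearMap.ker_eq_bot.mp (hker.resolve_right fun h ↦ hC ?_)
  rw [LinearMap.ker_eq_top, ← Matrix.toLin'_apply'] at h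
  exact (map_eq_zero_iff _ Matrix.toLin'.injective).mp h

end Commutant

/-! ### Monomial representations -/

/-- A multiplicative cocycle of a group `G` on a `G`-set `X` with values in the abelian group `A`;
for `A = Mˣ` it is the same as a monomial action of `G` on the free module `M ^ X` over the action
on `X`: the element `g` maps the basis vector of `x` to `c g x` times that of `g • x`. -/
structure MonomialCocycle (G X A : Type*) [Group G] [MulAction G X] [CommGroup A] where
  toFun : G → X → A
  map_mul' (g h : G) (x : X) : toFun (g * h) x = toFun g (h • x) * toFun h x

namespace MonomialCocycle

variable {G X A B : Type*} [Group G] [MulAction G X] [CommGroup A] [CommGroup B]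

instance : CoeFun (MonomialCocycle G X A) fun _ ↦ G → X → A := ⟨toFun⟩

lemma map_mul (c : MonomialCocycle G X A) (g h : G) (x : X) : c (g * h) x = c g (h • x) * c h x :=
  c.map_mul' g h x

@[simp]
lemma map_one (c : MonomialCocycle G X A) (x : X) : c 1 x = 1 := by
  simpa using c.map_mul 1 1 x

lemma map_inv (c : MonomialCocycle G X A) (g : G) (x : X) : c g⁻¹ x = (c g (g⁻¹ • x))⁻¹ := by
  rw [eq_inv_iff_mul_eq_one, mul_comm, ← c.map_mul, mul_inv_cancel, c.map_one]

lemma map_conj (c : MonomialCocycle G X A) {g h : G} {x : X} (hx : g • h • x = h • x) :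
    c (h⁻¹ * g * h) x = c g (h • x) := by
  rw [c.map_mul, c.map_mul, hx, c.map_inv, inv_smul_smul, mul_right_comm, inv_mul_cancel, one_mul]

/-- The cocycle obtained by applying a homomorphism to the values. -/
def map (c : MonomialCocycle G X A) (φ : A →* B) : MonomialCocycle G X B where
  toFun g x := φ (c g x)
  map_mul' g h x := by rw [c.map_mul, _root_.map_mul]

@[simp]
lemma map_apply (c : MonomialCocycle G X A) (φ : A →* B) (g : G) (x : X) :
    c.map φ g x = φ (c g x) := rfl

section Rep

variable {M : Type*} [CommRing M] [Fintype X] [DecidableEq X]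

/-- The monomial matrix representation attached to a cocycle. -/
def rep (c : MonomialCocycle G X Mˣ) : G →* Matrix X X M where
  toFun g := of fun y x ↦ if g • x = y then (c g x : M) else 0
  map_one' := by
    ext y x
    simp [Matrix.one_apply, eq_comm]
  map_mul' g h := by
    ext y x
    simp [Matrix.mul_apply, c.map_mul, mul_smul]

lemma rep_apply (c : MonomialCocycle G X Mˣ) (g : G) (y x : X) :
    c.rep g y x = if g • x = y then (c g x : M) else 0 := rfl

lemma mul_rep_apply (c : MonomialCocycle G X Mˣ) (C : Matrix X X M) (g : G) (y x : X) :
    (C * c.rep g) y x = C y (g • x) * c g x := by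
  simp [Matrix.mul_apply, rep_apply]

lemma rep_mul_apply_smul (c : MonomialCocycle G X Mˣ) (C : Matrix X X M) (g : G) (y x : X) :
    (c.rep g * C) (g • y) x = c g y * C y x := by
  simp [Matrix.mul_apply, rep_apply]

lemma mul_rep_eq_rep_mul_iff {c c' : MonomialCocycle G X Mˣ} {C : Matrix X X M} {g : G} :
    C * c.rep g = c'.rep g * C ↔ ∀ y x, C (g • y) (g • x) * c g x = c' g y * C y x := by
  refine ⟨fun h y x ↦ ?_, fun h ↦ Matrix.ext fun y x ↦ ?_⟩
  · rw [← mul_rep_apply, h, rep_mul_apply_smul]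
  · rw [← smul_inv_smul g y, mul_rep_apply, h, rep_mul_apply_smul]

lemma rep_map_apply {M' : Type*} [CommRing M'] (c : MonomialCocycle G X Mˣ) (f : M →+* M')
    (g : G) : (c.map (Units.map (f : M →* M'))).rep g = (c.rep g).map f := by
  ext y x
  simp [rep_apply, apply_ite f]

lemma conjTranspose_rep [StarRing M] {c : MonomialCocycle G X Mˣ}
    (hc : ∀ g x, star (c g x) = (c g x)⁻¹) (g : G) : (c.rep g)ᴴ = c.rep g⁻¹ := by
  ext y x
  rw [conjTranspose_apply, rep_apply, rep_apply, c.map_inv]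
  simp only [inv_smul_eq_iff]
  split_ifs with h h' h'
  · rw [h', inv_smul_smul, ← hc, Units.coe_star]
  · exact absurd h.symm h'
  · exact absurd h'.symm h
  · exact star_zero M

lemma trace_rep (c : MonomialCocycle G X Mˣ) (g : G) :
    (c.rep g).trace = ∑ x, if g • x = x then (c g x : M) else 0 := rfl

end Rep

lemma rep_hasScalarCommutant {M : Type*} [Field M] [Fintype X] [DecidableEq X]
    [MulAction.IsMultiplyPretransitive G X 2] (c : MonomialCocycle G X Mˣ) {g : G} {x y : X}
    (hxy : x ≠ y) (hgx : g • x = x) (hgy : g • y = y) (hne : c g x ≠ c g y) :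
    HasScalarCommutant c.rep := by
  intro C hC
  replace hC (g) := mul_rep_eq_rep_mul_iff.mp (hC g)
  have hoff : C y x = 0 := by
    have h := hC g y x
    rw [hgx, hgy, mul_comm, ← sub_eq_zero, ← sub_mul] at h
    exact (mul_eq_zero.mp h).resolve_left (sub_ne_zero.mpr fun h ↦ hne (Units.ext h))
  refine ⟨C x x, Matrix.ext fun i j ↦ ?_⟩
  rw [Matrix.smul_apply, smul_eq_mul]
  obtain rfl | hij := eq_or_ne i j
  · have := MulAction.isPretransitive_of_is_two_pretransitive (G := G) (α := X)
    obtain ⟨h, rfl⟩ := MulAction.exists_smul_eq G x i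
    rw [Matrix.one_apply_eq, mul_one, ← Units.mul_left_inj (c h x), hC, mul_comm]
  · obtain ⟨h, rfl, rfl⟩ : ∃ h : G, h • y = i ∧ h • x = j :=
      (MulAction.is_two_pretransitive_iff (G := G) (α := X)).mp inferInstance hxy.symm hij
    have := hC h y x
    rw [hoff, mul_zero, Units.mul_left_eq_zero] at this
    rw [this, Matrix.one_apply_ne hij, mul_zero]

lemma inducedChar_eq_trace_rep {G X : Type} [Group G] [Finite G] [MulAction G X]
    [Fintype X] [DecidableEq X] [MulAction.IsPretransitive G X] (c : MonomialCocycle G X ℂˣ)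
    (x₀ : X) (B : Subgroup G) (hB : MulAction.stabilizer G x₀ = B) (ψ : B → ℂ)
    (hψ : ∀ b : B, ψ b = c b x₀) :
    inducedChar B ψ = fun g ↦ (c.rep g).trace := by
  classical
  have := Fintype.ofFinite G
  ext g
  have hmem (x : G) : x⁻¹ * g * x ∈ B ↔ g • x • x₀ = x • x₀ := by
    rw [← hB, MulAction.mem_stabilizer_iff, mul_smul, mul_smul, inv_smul_eq_iff]
  have hterm (x : G) : (if h : x⁻¹ * g * x ∈ B then ψ ⟨_, h⟩ else 0) =
      if g • x • x₀ = x • x₀ then (c g (x • x₀) : ℂ) else 0 := by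
    simp only [hmem, hψ]
    split_ifs with h
    · rw [c.map_conj h]
    · rfl
  have hfiber (y : X) : (Finset.univ.filter fun x : G ↦ x • x₀ = y).card = Nat.card B := by
    obtain ⟨h, rfl⟩ := MulAction.exists_smul_eq G x₀ y
    rw [← Fintype.card_subtype, ← Nat.card_eq_fintype_card]
    refine Nat.card_congr ((Equiv.mulLeft h⁻¹).subtypeEquiv fun x ↦ ?_)
    rw [← hB, Equiv.coe_mulLeft, MulAction.mem_stabilizer_iff, mul_smul, inv_smul_eq_iff]
  rw [inducedChar, trace_rep, finsum_eq_sum_of_fintype, Finset.sum_congr rfl fun x _ ↦ hterm x,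
    ← Finset.sum_fiberwise Finset.univ (fun x : G ↦ x • x₀), Finset.mul_sum]
  refine Finset.sum_congr rfl fun y _ ↦ ?_
  rw [Finset.sum_congr rfl fun x hx ↦ by rw [(Finset.mem_filter.mp hx).2], Finset.sum_const, hfiber,
    nsmul_eq_mul, inv_mul_cancel_left₀ (Nat.cast_ne_zero.mpr Nat.card_pos.ne')]

end MonomialCocycle

/-! ### The special unitary group and its isotropic lines -/

section Unitary

variable (F : Type) [Field F] [StarRing F]

/-- The special unitary group of the Hermitian form with Gram matrix `Ω`, for an arbitrary field
with involution. -/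
def specialUnitary : Subgroup (SpecialLinearGroup (Fin 3) F) where
  carrier := {g | g.1ᴴ * Om F * g.1 = Om F}
  one_mem' := show (1 : Matrix (Fin 3) (Fin 3) F)ᴴ * Om F * 1 = Om F by simp
  mul_mem' {a b} (ha : a.1ᴴ * Om F * a.1 = Om F) (hb : b.1ᴴ * Om F * b.1 = Om F) :=
    show (a.1 * b.1)ᴴ * Om F * (a.1 * b.1) = Om F by
      calc _ = b.1ᴴ * (a.1ᴴ * Om F * a.1) * b.1 := by
            simp only [conjTranspose_mul, Matrix.mul_assoc]
        _ = Om F := by rw [ha, hb]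
  inv_mem' {a} (ha : a.1ᴴ * Om F * a.1 = Om F) :=
    show a⁻¹.1ᴴ * Om F * a⁻¹.1 = Om F by
      have h : a.1 * a⁻¹.1 = 1 := congrArg Subtype.val (mul_inv_cancel a)
      calc _ = (a.1 * a⁻¹.1)ᴴ * Om F * (a.1 * a⁻¹.1) := by
            nth_rw 1 [← ha]
            simp only [conjTranspose_mul, Matrix.mul_assoc]
        _ = Om F := by rw [h, conjTranspose_one, Matrix.one_mul, Matrix.mul_one]

/-- The set of isotropic lines of the Hermitian form `Ω`: `none` is the line spanned by the first
basis vector, and `some (y, z)` the line spanned by `(z - y * star y / 2, y, 1)`. -/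
abbrev IsotropicLine : Type := Option (F × skewAdjoint F)

variable {F}

/-- The Hermitian form with Gram matrix `Ω`. -/
def herm (v w : Fin 3 → F) : F := star v ⬝ᵥ Om F *ᵥ w

lemma herm_eq (v w : Fin 3 → F) :
    herm v w = star (v 0) * w 2 + star (v 1) * w 1 + star (v 2) * w 0 := by
  simp [herm, Om, Matrix.mulVec, dotProduct, Fin.sum_univ_three]

lemma conjTranspose_mul_Om_mul_apply (M : Matrix (Fin 3) (Fin 3) F) (i j : Fin 3) :
    (Mᴴ * Om F * M) i j = herm (M.col i) (M.col j) := by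
  rw [Matrix.mul_assoc]
  rfl

lemma herm_smul_smul (a b : F) (v w : Fin 3 → F) :
    herm (a • v) (b • w) = star a * b * herm v w := by
  simp only [herm_eq, Pi.smul_apply, smul_eq_mul, star_mul']
  ring

lemma star_herm (v w : Fin 3 → F) : star (herm v w) = herm w v := by
  simp only [herm_eq, star_add, star_mul', star_star]
  ring

namespace IsotropicLine

/-- The normalised vector spanning an isotropic line. -/
def vector : IsotropicLine F → Fin 3 → F
  | none => ![1, 0, 0]
  | some (y, z) => ![z - y * star y / 2, y, 1]

lemma smul_vector_injective {a b : F} {x y : IsotropicLine F} (ha : a ≠ 0) (hb : b ≠ 0)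
    (h : a • vector x = b • vector y) : a = b ∧ x = y := by
  have h0 := congrFun h 0
  have h1 := congrFun h 1
  have h2 := congrFun h 2
  match x, y with
  | none, none => simpa [vector] using h0
  | none, some (y, z) => exact absurd (by simpa [vector] using h2.symm) hb
  | some (y, z), none => exact absurd (by simpa [vector] using h2) ha
  | some (y, z), some (y', z') =>
    obtain rfl : a = b := by simpa [vector] using h2
    obtain rfl : y = y' := by simpa [vector, ha] using h1
    obtain rfl : z = z' := by simpa [vector, ha] using h0
    exact ⟨rfl, rfl⟩

lemma vector_ne_zero (x : IsotropicLine F) : vector x ≠ 0 := by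
  intro h
  match x with
  | none => simpa [vector] using congrFun h 0
  | some (y, z) => simpa [vector] using congrFun h 2

/-- The value of the Hermitian form on the normalised vectors spanning two isotropic lines. -/
def pairing (x y : IsotropicLine F) : F := herm (vector x) (vector y)

@[simp]
lemma pairing_none_none : pairing (none : IsotropicLine F) none = 0 := by
  simp [pairing, herm_eq, vector]

@[simp]
lemma pairing_none_some (p : F × skewAdjoint F) : pairing none (some p) = 1 := by
  simp [pairing, herm_eq, vector]

@[simp]
lemma pairing_some_none (p : F × skewAdjoint F) : pairing (some p) none = 1 := by
  simp [pairing, herm_eq, vector]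

lemma star_pairing (x y : IsotropicLine F) : star (pairing x y) = pairing y x := star_herm _ _

variable [NeZero (2 : F)]

lemma pairing_some_some (y y' : F) (z z' : skewAdjoint F) :
    pairing (some (y, z)) (some (y', z')) = ((z' - z : skewAdjoint F) : F)
      - (y - y') * star (y - y') / 2 + (star y * y' - y * star y') / 2 := by
  have hz : star (z : F) = -z := z.2
  simp only [pairing, herm_eq, vector, Matrix.cons_val_zero, Matrix.cons_val_one, Matrix.cons_val,
    star_sub, star_div₀, star_mul', star_star, star_ofNat, hz, star_one, AddSubgroupClass.coe_sub]
  have := two_ne_zero (α := F)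
  field_simp
  ring

@[simp]
lemma pairing_self (x : IsotropicLine F) : pairing x x = 0 := by
  match x with
  | none => simp
  | some (y, z) => simp [pairing_some_some, mul_comm]

lemma exists_eq_smul_vector {v : Fin 3 → F} (hv : v ≠ 0) (h : herm v v = 0) :
    ∃ (a : Fˣ) (x : IsotropicLine F), v = (a : F) • vector x := by
  rw [herm_eq] at h
  by_cases h2 : v 2 = 0
  · have h1 : v 1 = 0 := by simpa [h2] using h
    have h0 : v 0 ≠ 0 := fun h0 ↦ hv (by ext i; fin_cases i <;> simpa)
    exact ⟨Units.mk0 _ h0, none, by ext i; fin_cases i <;> simp [vector, h1, h2]⟩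
  · have hs : star (v 2) ≠ 0 := star_ne_zero.mpr h2
    have htwo := two_ne_zero (α := F)
    have hz : v 0 / v 2 + v 1 / v 2 * star (v 1 / v 2) / 2 ∈ skewAdjoint F := by
      rw [skewAdjoint.mem_iff]
      simp only [star_add, star_div₀, star_mul', star_star, star_ofNat]
      field_simp
      linear_combination 2 * h
    exact ⟨Units.mk0 _ h2, some (v 1 / v 2, ⟨_, hz⟩), by
      ext i; fin_cases i <;> simp [vector] <;> field_simp⟩

end IsotropicLine

namespace specialUnitary

open IsotropicLine

/-- The tautological matrix representation. -/
def toMatrix : specialUnitary F →* Matrix (Fin 3) (Fin 3) F where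
  toFun g := g.1.1
  map_one' := rfl
  map_mul' _ _ := rfl

lemma conjTranspose_mul_toMatrix (g : specialUnitary F) :
    (toMatrix g)ᴴ * Om F * toMatrix g = Om F := g.2

/-- The special unitary element with a given matrix. -/
def ofMatrix (M : Matrix (Fin 3) (Fin 3) F) (hdet : M.det = 1) (hM : Mᴴ * Om F * M = Om F) :
    specialUnitary F :=
  ⟨⟨M, hdet⟩, hM⟩

@[simp]
lemma toMatrix_ofMatrix (M : Matrix (Fin 3) (Fin 3) F) (hdet : M.det = 1)
    (hM : Mᴴ * Om F * M = Om F) : toMatrix (ofMatrix M hdet hM) = M := rfl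

lemma herm_mulVec (g : specialUnitary F) (v w : Fin 3 → F) :
    herm (toMatrix g *ᵥ v) (toMatrix g *ᵥ w) = herm v w := by
  rw [herm, star_mulVec, ← dotProduct_mulVec, Matrix.mulVec_mulVec, Matrix.mulVec_mulVec,
    conjTranspose_mul_toMatrix, herm]

lemma mulVec_ne_zero (g : specialUnitary F) {v : Fin 3 → F} (hv : v ≠ 0) :
    toMatrix g *ᵥ v ≠ 0 := fun h ↦ hv <| by
  rw [← Matrix.one_mulVec v, ← _root_.map_one toMatrix, ← inv_mul_cancel g, _root_.map_mul,
    ← Matrix.mulVec_mulVec, h, Matrix.mulVec_zero]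

lemma exists_mulVec_vector [NeZero (2 : F)] (g : specialUnitary F) (x : IsotropicLine F) :
    ∃ p : Fˣ × IsotropicLine F, toMatrix g *ᵥ vector x = (p.1 : F) • vector p.2 := by
  obtain ⟨a, y, h⟩ := exists_eq_smul_vector (mulVec_ne_zero g (vector_ne_zero x))
    ((herm_mulVec g _ _).trans (pairing_self x))
  exact ⟨(a, y), h⟩

variable [NeZero (2 : F)]

instance : SMul (specialUnitary F) (IsotropicLine F) where
  smul g x := (exists_mulVec_vector g x).choose.2

/-- The factor by which a special unitary matrix scales the normalised vector of an isotropic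
line, relative to the normalised vector of the image line. -/
def factor (g : specialUnitary F) (x : IsotropicLine F) : Fˣ := (exists_mulVec_vector g x).choose.1

lemma mulVec_vector (g : specialUnitary F) (x : IsotropicLine F) :
    toMatrix g *ᵥ vector x = (factor g x : F) • vector (g • x) :=
  (exists_mulVec_vector g x).choose_spec

lemma factor_eq_and_smul_eq {g : specialUnitary F} {x y : IsotropicLine F} {a : Fˣ}
    (h : toMatrix g *ᵥ vector x = (a : F) • vector y) : factor g x = a ∧ g • x = y := by
  have := smul_vector_injective (Units.ne_zero _) a.ne_zero ((mulVec_vector g x).symm.trans h)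
  exact ⟨Units.ext this.1, this.2⟩

lemma factor_mul_and_mul_smul (g h : specialUnitary F) (x : IsotropicLine F) :
    factor (g * h) x = factor g (h • x) * factor h x ∧ (g * h) • x = g • h • x :=
  factor_eq_and_smul_eq <| by
    rw [_root_.map_mul, ← Matrix.mulVec_mulVec, mulVec_vector, Matrix.mulVec_smul, mulVec_vector,
      smul_smul, Units.val_mul, mul_comm]

instance : MulAction (specialUnitary F) (IsotropicLine F) where
  one_smul x := (factor_eq_and_smul_eq (a := 1) (by simp)).2
  mul_smul g h x := (factor_mul_and_mul_smul g h x).2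

/-- The cocycle of the factors `factor g x`. -/
def factorCocycle : MonomialCocycle (specialUnitary F) (IsotropicLine F) Fˣ where
  toFun := factor
  map_mul' g h x := (factor_mul_and_mul_smul g h x).1

lemma pairing_smul_smul (g : specialUnitary F) (x y : IsotropicLine F) :
    star (factor g x : F) * factor g y * pairing (g • x) (g • y) = pairing x y := by
  rw [pairing, ← herm_smul_smul, ← mulVec_vector, ← mulVec_vector, herm_mulVec, pairing]

/-- The unipotent upper triangular matrices. -/
def unipotent (y : F) (z : skewAdjoint F) : specialUnitary F :=
  ofMatrix !![1, -star y, z - y * star y / 2; 0, 1, y; 0, 0, 1] (by simp [det_fin_three]) <| by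
    have hz : star (z : F) = -z := z.2
    have := two_ne_zero (α := F)
    ext i j
    rw [conjTranspose_mul_Om_mul_apply, herm_eq]
    fin_cases i <;> fin_cases j <;> simp [Om, hz]
    field_simp
    ring

/-- The matrix interchanging the first and last coordinate lines. -/
def weyl : specialUnitary F :=
  ofMatrix !![0, 0, 1; 0, -1, 0; 1, 0, 0] (by simp [det_fin_three]) <| by
    ext i j
    rw [conjTranspose_mul_Om_mul_apply, herm_eq]
    fin_cases i <;> fin_cases j <;> simp [Om]

/-- The diagonal matrix with top-left entry `a`. -/
def torus (a : Fˣ) : specialUnitary F :=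
  ofMatrix !![(a : F), 0, 0; 0, star (a : F) / a, 0; 0, 0, (star (a : F))⁻¹]
    (by simp [det_fin_three, mul_div_cancel₀]) <| by
    ext i j
    rw [conjTranspose_mul_Om_mul_apply, herm_eq]
    fin_cases i <;> fin_cases j <;> simp [Om]

lemma unipotent_smul_none (y : F) (z : skewAdjoint F) :
    unipotent y z • (none : IsotropicLine F) = none :=
  (factor_eq_and_smul_eq (a := 1) (by ext i; fin_cases i <;> simp [unipotent, vector])).2

lemma unipotent_smul_zero (y : F) (z : skewAdjoint F) :
    unipotent y z • (some 0 : IsotropicLine F) = some (y, z) :=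
  (factor_eq_and_smul_eq (a := 1) (by
    ext i
    fin_cases i <;> simp [unipotent, vector, Matrix.mulVec, dotProduct, Fin.sum_univ_three])).2

lemma weyl_smul_none : (weyl : specialUnitary F) • (none : IsotropicLine F) = some 0 :=
  (factor_eq_and_smul_eq (a := 1) (by ext i; fin_cases i <;> simp [weyl, vector])).2

lemma torus_smul_none (a : Fˣ) :
    factor (torus a) (none : IsotropicLine F) = a ∧ torus a • (none : IsotropicLine F) = none :=
  factor_eq_and_smul_eq (by ext i; fin_cases i <;> simp [torus, vector])

lemma torus_smul_some (a : Fˣ) (y : F) (z : skewAdjoint F) :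
    factor (torus a) (some (y, z)) = (star a)⁻¹ ∧ torus a • (some (y, z) : IsotropicLine F) =
      some (star (a : F) ^ 2 / a * y, ⟨a * star (a : F) * z, by
        rw [skewAdjoint.mem_iff, star_mul', star_mul', star_star, z.2, mul_comm (star _),
          mul_neg]⟩) :=
  factor_eq_and_smul_eq (by
    ext i
    fin_cases i <;> simp [torus, vector, Matrix.mulVec, dotProduct, Fin.sum_univ_three] <;>
      field_simp)

lemma torus_smul_some_eq_iff {a : Fˣ} {y : F} {z : skewAdjoint F} :
    torus a • (some (y, z) : IsotropicLine F) = some (y, z) ↔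
      (star (a : F) ^ 2 = a ∨ y = 0) ∧ (a * star (a : F) = 1 ∨ z = 0) := by
  rw [(torus_smul_some a y z).2, Option.some_inj, Prod.mk_inj, Subtype.ext_iff, mul_left_eq_self₀,
    mul_left_eq_self₀, div_eq_one_iff_eq a.ne_zero, ZeroMemClass.coe_eq_zero]

lemma torus_smul_zero (a : Fˣ) :
    factor (torus a) (some 0) = (star a)⁻¹ ∧ torus a • (some 0 : IsotropicLine F) = some 0 :=
  ⟨(torus_smul_some a 0 0).1, torus_smul_some_eq_iff.mpr ⟨.inr rfl, .inr rfl⟩⟩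

instance : MulAction.IsMultiplyPretransitive (specialUnitary F) (IsotropicLine F) 2 := by
  rw [MulAction.is_two_pretransitive_iff]
  have htrans (x : IsotropicLine F) : ∃ g : specialUnitary F, g • none = x := by
    match x with
    | none => exact ⟨1, one_smul _ _⟩
    | some (y, z) => exact ⟨unipotent y z * weyl, by
        rw [mul_smul, weyl_smul_none, unipotent_smul_zero]⟩
  have hbase {x y : IsotropicLine F} (hxy : x ≠ y) :
      ∃ g : specialUnitary F, g • none = x ∧ g • some 0 = y := by
    obtain ⟨g, rfl⟩ := htrans x
    obtain ⟨⟨a, b⟩, hab⟩ : ∃ p, g⁻¹ • y = some p := Option.ne_none_iff_exists'.mp fun h ↦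
      hxy (by rw [← h, smul_inv_smul])
    exact ⟨g * unipotent a b, by rw [mul_smul, unipotent_smul_none],
      by rw [mul_smul, unipotent_smul_zero, ← hab, smul_inv_smul]⟩
  intro a b c d hab hcd
  obtain ⟨g, rfl, rfl⟩ := hbase hab
  obtain ⟨h, rfl, rfl⟩ := hbase hcd
  exact ⟨h * g⁻¹, by rw [mul_smul, inv_smul_smul], by rw [mul_smul, inv_smul_smul]⟩

lemma mem_stabilizer_none_iff {g : specialUnitary F} :
    g ∈ MulAction.stabilizer (specialUnitary F) (none : IsotropicLine F) ↔
      (toMatrix g).BlockTriangular id := by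
  rw [MulAction.mem_stabilizer_iff]
  constructor <;> intro h
  · have hcol (i) : toMatrix g i 0 = (factor g none : F) * vector (none : IsotropicLine F) i := by
      have := congrFun (mulVec_vector g none) i
      rw [h] at this
      simpa [vector, Matrix.mulVec, dotProduct, Fin.sum_univ_three] using this
    have h21 : toMatrix g 2 1 = 0 := by
      have := congrFun₂ (conjTranspose_mul_toMatrix g) 0 1
      rw [conjTranspose_mul_Om_mul_apply, herm_eq] at this
      simpa [hcol, vector, Om] using this
    intro i j hij
    fin_cases i <;> fin_cases j <;> simp [vector, hcol, h21] at hij ⊢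
  · have h10 : toMatrix g 1 0 = 0 := h (by decide)
    have h20 : toMatrix g 2 0 = 0 := h (by decide)
    have hmul : toMatrix g *ᵥ vector none = toMatrix g 0 0 • vector none := by
      ext i; fin_cases i <;>
        simp [vector, h10, h20, Matrix.mulVec, dotProduct, Fin.sum_univ_three]
    have h00 : toMatrix g 0 0 ≠ 0 := fun h00 ↦
      mulVec_ne_zero g (vector_ne_zero none) (by rw [hmul, h00, zero_smul])
    exact (factor_eq_and_smul_eq (a := Units.mk0 _ h00) hmul).2

lemma factor_none {g : specialUnitary F} (hg : g • (none : IsotropicLine F) = none) :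
    (factor g none : F) = toMatrix g 0 0 := by
  have := congrFun (mulVec_vector g none) 0
  rw [hg] at this
  simpa [vector, Matrix.mulVec, dotProduct, Fin.sum_univ_three] using this.symm

end specialUnitary
end Unitary

/-! ### The principal series and its twisted intertwining operator -/

section PrincipalSeries

open IsotropicLine specialUnitary

variable {F M : Type} [Field F] [StarRing F] [NeZero (2 : F)] [Field M]

lemma factorCocycle_map_apply (θ : MulChar F M) (g : specialUnitary F) (x : IsotropicLine F) :
    (factorCocycle.map θ.toUnitHom g x : M) = θ (factor g x) := θ.coe_toUnitHom _

variable [Fintype F] [DecidableEq F] [Fintype (skewAdjoint F)]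

/-- The representation of `specialUnitary F` induced from the character `g ↦ θ (g 0 0)` of its
Borel subgroup, in its monomial model with basis the isotropic lines. -/
def principalSeries (θ : MulChar F M) :
    specialUnitary F →* Matrix (IsotropicLine F) (IsotropicLine F) M :=
  (factorCocycle.map θ.toUnitHom).rep

lemma principalSeries_hasScalarCommutant {θ : MulChar F M} {a : Fˣ}
    (ha : θ (a * star (a : F)) ≠ 1) : HasScalarCommutant (principalSeries θ) := by
  obtain ⟨hnone, hgnone⟩ := torus_smul_none a
  obtain ⟨hzero, hgzero⟩ := torus_smul_zero a
  refine MonomialCocycle.rep_hasScalarCommutant _ (Option.some_ne_none 0).symm hgnone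
    hgzero fun h ↦ ha ?_
  rw [← Units.val_inj, factorCocycle_map_apply, factorCocycle_map_apply, hnone, hzero] at h
  rw [map_mul, h, ← map_mul, Units.val_inv_eq_inv_val, Units.coe_star, inv_mul_cancel₀ (by simp),
    map_one]

lemma conjTranspose_principalSeries_mul_self [StarRing M] {θ : MulChar F M}
    (hθ : ∀ x, star (θ x) = (θ x)⁻¹) (g : specialUnitary F) :
    (principalSeries θ g)ᴴ * principalSeries θ g = 1 := by
  have hstar (g : specialUnitary F) (x : IsotropicLine F) :
      star (factorCocycle.map θ.toUnitHom g x) = (factorCocycle.map θ.toUnitHom g x)⁻¹ :=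
    Units.ext <| by
      rw [Units.coe_star, Units.val_inv_eq_inv_val, factorCocycle_map_apply, hθ]
  rw [principalSeries, MonomialCocycle.conjTranspose_rep hstar, ← map_mul, inv_mul_cancel, map_one]

lemma trace_principalSeries (θ : MulChar F M) (g : specialUnitary F) :
    (principalSeries θ g).trace = ∑ x, if g • x = x then θ (factor g x) else 0 := by
  simp only [principalSeries, MonomialCocycle.trace_rep, factorCocycle_map_apply]

lemma trace_principalSeries_torus (θ : MulChar F M) {a : Fˣ} (h₁ : a * star (a : F) ≠ 1)
    (h₂ : star (a : F) ^ 2 ≠ a) :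
    (principalSeries θ (torus a)).trace = θ a + (θ (star (a : F)))⁻¹ := by
  rw [trace_principalSeries, Fintype.sum_option, (torus_smul_none a).1,
    if_pos (torus_smul_none a).2, Finset.sum_eq_single 0]
  · rw [if_pos (torus_smul_zero a).2, (torus_smul_zero a).1, Units.val_inv_eq_inv_val,
      Units.coe_star, ← MulChar.inv_apply', MulChar.inv_apply_eq_inv']
  · rintro ⟨y, z⟩ - hyz
    refine if_neg fun h ↦ hyz ?_
    obtain ⟨hy, hz⟩ := torus_smul_some_eq_iff.mp h
    exact Prod.ext (hy.resolve_left h₂) (hz.resolve_left h₁)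
  · simp

lemma exists_trace_principalSeries_torus (θ : MulChar F M) {a : Fˣ} (ha : a * star (a : F) = 1) :
    ∃ n : ℕ, n ≠ 0 ∧ (principalSeries θ (torus a)).trace = n * θ a := by
  have hfactor (x : IsotropicLine F) : factor (torus a) x = a := by
    match x with
    | none => exact (torus_smul_none a).1
    | some (y, z) =>
      exact (torus_smul_some a y z).1.trans (inv_eq_of_mul_eq_one_left (Units.ext ha))
  refine ⟨(Finset.univ.filter fun x : IsotropicLine F ↦ torus a • x = x).card,
    (Finset.card_pos.mpr ⟨none, by simp [(torus_smul_none a).2]⟩).ne', ?_⟩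
  simp only [trace_principalSeries, hfactor, ← Finset.sum_filter, Finset.sum_const, nsmul_eq_mul]

/-- The standard intertwining operator of the principal series, with kernel `θ` of the Hermitian
pairing. -/
def intertwiner (θ : MulChar F M) : Matrix (IsotropicLine F) (IsotropicLine F) M :=
  of fun x y ↦ θ (pairing x y)

variable {θ : MulChar F M} {τ : M →+* M} (hτ : ∀ x, τ (θ x) = (θ (star x))⁻¹)
include hτ

lemma intertwiner_mul_principalSeries (g : specialUnitary F) :
    intertwiner θ * principalSeries θ g = (principalSeries θ g).map τ * intertwiner θ := by
  rw [principalSeries, ← MonomialCocycle.rep_map_apply, MonomialCocycle.mul_rep_eq_rep_mul_iff]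
  intro y x
  change θ (pairing _ _) * (factorCocycle.map θ.toUnitHom g x : M) =
    τ (factorCocycle.map θ.toUnitHom g y : M) * θ (pairing y x)
  have hne : θ (star (factor g y : F)) ≠ 0 :=
    (((factor g y).isUnit.map (starRingEnd F)).map θ).ne_zero
  rw [factorCocycle_map_apply, factorCocycle_map_apply, hτ, eq_inv_mul_iff_mul_eq₀ hne]
  simp only [← map_mul, ← pairing_smul_smul g y x]
  congr 1
  ring

omit [NeZero (2 : F)] [Fintype F] [DecidableEq F] [Fintype (skewAdjoint F)] in
lemma map_intertwiner [StarRing M] (hθ : ∀ x, star (θ x) = (θ x)⁻¹) :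
    (intertwiner θ).map τ = (intertwiner θ)ᴴ := by
  ext x y
  rw [map_apply, conjTranspose_apply, intertwiner, of_apply, of_apply, hτ, hθ, star_pairing]

lemma map_intertwiner_mul_intertwiner (hττ : ∀ x, τ (τ x) = x)
    (hρ : HasScalarCommutant (principalSeries θ)) :
    (intertwiner θ).map τ * intertwiner θ = (Fintype.card (F × skewAdjoint F) : M) • 1 := by
  obtain ⟨c, hc⟩ := hρ ((intertwiner θ).map τ * intertwiner θ) fun g ↦ by
    have h := congrArg (Matrix.map · τ) (intertwiner_mul_principalSeries hτ g)
    simp only [Matrix.map_mul, Matrix.map_map, Function.comp_def, hττ, Matrix.map_id'] at h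
    rw [Matrix.mul_assoc, intertwiner_mul_principalSeries hτ, ← Matrix.mul_assoc, h,
      Matrix.mul_assoc]
  have hentry := congrFun₂ hc none none
  rw [Matrix.mul_apply, Fintype.sum_option, Matrix.smul_apply, Matrix.one_apply_eq, smul_eq_mul,
    mul_one] at hentry
  simp only [map_apply, intertwiner, of_apply, pairing_none_none, pairing_none_some,
    pairing_some_none, map_one, mul_one, MulChar.map_zero, mul_zero, zero_add, Finset.sum_const,
    Finset.card_univ, nsmul_one] at hentry
  rw [hc, hentry]

end PrincipalSeries

/-! ### Finite fields with involution -/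

/-- The finite field with `q ^ 2` elements, `q` odd, with the Frobenius map `x ↦ x ^ q` as its
involution. -/
class IsHermitianField (q : outParam ℕ) (F : Type) [Field F] [StarRing F] : Prop where
  finite (F) : Finite F
  odd (F) : Odd q
  card_eq (F) : Nat.card F = q ^ 2
  star_eq_pow (x : F) : star x = x ^ q

namespace IsHermitianField

attribute [instance] finite

variable {q : ℕ} (F : Type) [Field F] [StarRing F] [hF : IsHermitianField q F]

include F in
lemma one_lt : 1 < q := by
  have := Finite.one_lt_card (α := F)
  rw [card_eq F] at this
  exact (Nat.one_lt_pow_iff two_ne_zero).mp this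

include F in
lemma three_le : 3 ≤ q := by
  obtain ⟨k, rfl⟩ := odd F
  have := one_lt F
  lia

instance : NeZero (2 : F) where
  out h := by
    have := Fintype.ofFinite F
    have heven := FiniteField.even_card_of_char_two
      (CharP.ringChar_of_prime_eq_zero Nat.prime_two h)
    rw [Fintype.card_eq_nat_card, card_eq F] at heven
    exact Nat.not_even_iff_odd.mpr ((odd F).pow (n := 2)) (Nat.even_iff.mpr heven)

variable {F} in
lemma orderOf_eq_of_forall_mem_powers {g : Fˣ} (hg : ∀ x, x ∈ Submonoid.powers g) :
    orderOf g = q ^ 2 - 1 := by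
  rw [orderOf_eq_card_of_forall_mem_powers hg, Nat.card_units, card_eq F]

lemma exists_generator : ∃ g : Fˣ, (∀ x, x ∈ Submonoid.powers g) ∧ orderOf g = q ^ 2 - 1 := by
  obtain ⟨g, hg⟩ := IsCyclic.exists_monoid_generator (α := Fˣ)
  exact ⟨g, hg, orderOf_eq_of_forall_mem_powers hg⟩

variable {F}

lemma pow_sq_sub_one (x : Fˣ) : x ^ (q ^ 2 - 1) = 1 := by
  rw [← card_eq F, ← Nat.card_units, pow_card_eq_one']

lemma star_eq_self_iff {x : Fˣ} : star (x : F) = x ↔ x ^ (q - 1) = 1 := by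
  have hq : q = q - 1 + 1 := (Nat.sub_add_cancel (one_lt F).le).symm
  rw [star_eq_pow, ← Units.val_pow_eq_pow_val, Units.val_inj]
  nth_rw 1 [hq]
  rw [pow_succ, mul_eq_right]

include hF in
lemma mul_star_ne_one {g : Fˣ} (hg : ∀ x, x ∈ Submonoid.powers g) : g * star (g : F) ≠ 1 := by
  have hq := three_le F
  rw [star_eq_pow, ← pow_succ', ← Units.val_pow_eq_pow_val, Ne, Units.val_eq_one]
  refine pow_ne_one_of_lt_orderOf (Nat.succ_ne_zero q) ?_
  rw [orderOf_eq_of_forall_mem_powers hg, Nat.lt_sub_iff_add_lt]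
  nlinarith

include hF in
lemma star_sq_ne_self {g : Fˣ} (hg : ∀ x, x ∈ Submonoid.powers g) : star (g : F) ^ 2 ≠ g := by
  have hq := three_le F
  rw [star_eq_pow, ← pow_mul, ← Units.val_pow_eq_pow_val, Ne, Units.val_inj,
    ← Nat.sub_add_cancel (show 1 ≤ q * 2 by lia), pow_succ, mul_eq_right]
  refine pow_ne_one_of_lt_orderOf (by lia) ?_
  rw [orderOf_eq_of_forall_mem_powers hg, Nat.lt_sub_iff_add_lt, Nat.sub_add_cancel (by lia)]
  nlinarith

include hF in
variable (F) in
lemma exists_skewAdjoint_ne_zero : ∃ z : skewAdjoint F, z ≠ 0 := by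
  obtain ⟨g, -, hg⟩ := exists_generator F
  have hq := one_lt F
  have hne : star (g : F) ≠ g := fun h ↦ by
    have := orderOf_le_of_pow_eq_one (by lia) (star_eq_self_iff.mp h)
    rw [hg, show q ^ 2 - 1 = (q + 1) * (q - 1) from Nat.sq_sub_sq q 1] at this
    nlinarith [Nat.sub_pos_of_lt hq]
  refine ⟨⟨star (g : F) - g, ?_⟩, fun h ↦ hne (sub_eq_zero.mp (congrArg Subtype.val h))⟩
  rw [skewAdjoint.mem_iff, star_sub, star_star, neg_sub]

include hF in
lemma exists_mul_star_eq {r : Fˣ} (hr : star (r : F) = r) :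
    ∃ a : Fˣ, (a : F) * star (a : F) = r := by
  obtain ⟨g, hg, hord⟩ := exists_generator F
  obtain ⟨i, rfl⟩ := hg r
  have hq := one_lt F
  have hdvd := orderOf_dvd_of_pow_eq_one ((pow_mul g i _).trans (star_eq_self_iff.mp hr))
  rw [hord, show q ^ 2 - 1 = (q + 1) * (q - 1) from Nat.sq_sub_sq q 1] at hdvd
  obtain ⟨j, rfl⟩ := Nat.dvd_of_mul_dvd_mul_right (Nat.sub_pos_of_lt hq) hdvd
  refine ⟨g ^ j, ?_⟩
  rw [star_eq_pow]
  push_cast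
  ring

lemma mul_skewAdjoint_bijective {c : skewAdjoint F} (hc : c ≠ 0) :
    Function.Bijective fun r : selfAdjoint F ↦ (⟨r * c, by
      rw [skewAdjoint.mem_iff, star_mul', r.2, c.2, mul_neg]⟩ : skewAdjoint F) := by
  have hc' : (c : F) ≠ 0 := by simpa using hc
  refine ⟨fun r s h ↦ Subtype.ext (mul_right_cancel₀ hc' (congrArg Subtype.val h)), fun z ↦ ?_⟩
  refine ⟨⟨z / c, ?_⟩, Subtype.ext (div_mul_cancel₀ _ hc')⟩
  rw [selfAdjoint.mem_iff, star_div₀, z.2, c.2, neg_div_neg_eq]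

variable (F) in
lemma card_selfAdjoint_mul_card_skewAdjoint :
    Nat.card (selfAdjoint F) * Nat.card (skewAdjoint F) = q ^ 2 := by
  have htwo := two_ne_zero (α := F)
  rw [← card_eq F, ← Nat.card_prod]
  refine Nat.card_eq_of_bijective (fun p ↦ (p.1 + p.2 : F)) ⟨fun p p' h ↦ ?_, fun x ↦ ?_⟩
  · have h' := congrArg star h
    simp only [star_add, p.1.2.star_eq, p'.1.2.star_eq, skewAdjoint.star_val_eq] at h'
    exact Prod.ext (Subtype.ext (mul_left_cancel₀ htwo (by linear_combination h + h')))
      (Subtype.ext (mul_left_cancel₀ htwo (by linear_combination h - h')))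
  · refine ⟨(⟨(x + star x) / 2, ?_⟩, ⟨(x - star x) / 2, ?_⟩), by field_simp; ring⟩
    · simp [selfAdjoint.mem_iff, star_div₀, add_comm]
    · rw [skewAdjoint.mem_iff, star_div₀, star_sub, star_star, star_ofNat, ← neg_div, neg_sub]

variable (F) in
lemma card_selfAdjoint : Nat.card (selfAdjoint F) = q := by
  obtain ⟨c, hc⟩ := exists_skewAdjoint_ne_zero F
  have h := card_selfAdjoint_mul_card_skewAdjoint F
  rw [← Nat.card_eq_of_bijective _ (mul_skewAdjoint_bijective hc), ← sq] at h
  exact Nat.pow_left_injective two_ne_zero h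

variable (F) in
lemma card_skewAdjoint : Nat.card (skewAdjoint F) = q := by
  obtain ⟨c, hc⟩ := exists_skewAdjoint_ne_zero F
  rw [← Nat.card_eq_of_bijective _ (mul_skewAdjoint_bijective hc), card_selfAdjoint F]

variable (F) in
lemma card_prod_skewAdjoint : Nat.card (F × skewAdjoint F) = q ^ 3 := by
  rw [Nat.card_prod, card_eq F, card_skewAdjoint F, ← pow_succ]

end IsHermitianField

/-! ### Determinants of block circulant matrices -/

section Circulant

variable {G Y N : Type*} [AddCommGroup G] [Fintype G] [DecidableEq G] [Fintype Y] [DecidableEq Y]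

lemma det_of_addChar_ne_zero [Field N] {χ : G → AddChar G N} (hχ : Function.Injective χ) :
    (of fun g c ↦ χ c g : Matrix G G N).det ≠ 0 := by
  rw [← isUnit_iff_ne_zero, ← Matrix.isUnit_iff_isUnit_det,
    ← Matrix.linearIndependent_cols_iff_isUnit]
  exact (linearIndependent_monoidHom (Multiplicative G) N).comp (fun c ↦ (χ c).toMonoidHom)
    (AddChar.toMonoidHomEquiv.injective.comp hχ)

lemma det_blockCirculant [Field N] {χ : G → AddChar G N} (hχ : Function.Injective χ)
    (m : G → Matrix Y Y N) :
    (of fun p p' : Y × G ↦ m (p'.2 - p.2) p.1 p'.1 : Matrix (Y × G) (Y × G) N).det =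
      ∏ c, (∑ g, χ c g • m g).det := by
  set U : Matrix (Y × G) (Y × G) N := kroneckerMap (· * ·) 1 (of fun g c ↦ χ c g) with hU
  have hdet : U.det ≠ 0 := by
    rw [hU, det_kronecker, det_one, one_pow, one_mul]
    exact pow_ne_zero _ (det_of_addChar_ne_zero hχ)
  refine mul_right_cancel₀ hdet ?_
  rw [← det_blockDiagonal, mul_comm (det (blockDiagonal _)), ← det_mul, ← det_mul]
  congr 1
  ext ⟨y, g⟩ ⟨y', c⟩
  simp only [hU, Matrix.mul_apply, Fintype.sum_prod_type, kroneckerMap_apply, Matrix.one_apply,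
    of_apply, blockDiagonal_apply, Matrix.sum_apply, Matrix.smul_apply, smul_eq_mul, ite_mul,
    one_mul, zero_mul, mul_ite, mul_zero, Finset.sum_ite_irrel, Finset.sum_const_zero,
    Finset.sum_ite_eq, Finset.sum_ite_eq', Finset.mem_univ, if_true]
  rw [Finset.mul_sum, ← Equiv.sum_comp (Equiv.addRight g)]
  refine Finset.sum_congr rfl fun x _ ↦ ?_
  rw [Equiv.coe_addRight, add_sub_cancel_right, AddChar.map_add_eq_mul]
  ring

lemma det_circulant [Field N] {χ : G → AddChar G N} (hχ : Function.Injective χ) (v : G → N) :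
    (of fun g g' ↦ v (g' - g)).det = ∏ c, ∑ g, χ c g * v g := by
  have h := det_blockCirculant hχ fun g ↦ (of fun _ _ ↦ v g : Matrix Unit Unit N)
  rw [← Matrix.det_submatrix_equiv_self (Equiv.punitProd G)]
  refine Eq.trans (congrArg det ?_) (h.trans (Finset.prod_congr rfl fun c _ ↦ ?_))
  · rfl
  · simp [Matrix.sum_apply]

lemma det_fromBlocks_zero_one_one [CommRing N] (A : Matrix Y Y N) :
    (fromBlocks (0 : Matrix Unit Unit N) (of fun _ _ ↦ 1) (of fun _ _ ↦ 1) A).det =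
      A.det - (A + of fun _ _ ↦ 1).det := by
  have hunit : (fromBlocks (1 : Matrix Unit Unit N) (of fun _ _ ↦ 1) 0 A).det = A.det := by
    rw [det_fromBlocks_zero₂₁, det_one, one_mul]
  have hsub : (fromBlocks (1 : Matrix Unit Unit N) (of fun _ _ ↦ 1) (of fun _ _ ↦ -1) A).det =
      (A + of fun _ _ ↦ 1).det := by
    rw [det_fromBlocks_one₁₁, ← sub_neg_eq_add]
    congr 2
    ext
    simp [Matrix.mul_apply]
  rw [← hunit, ← hsub, eq_sub_iff_add_eq]
  set C := fromBlocks (1 : Matrix Unit Unit N) (of fun _ _ ↦ 1) 0 A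
  have hcol (B : Matrix Unit Unit N) (B' : Matrix Y Unit N) :
      fromBlocks B (of fun _ _ ↦ 1) B' A =
        C.updateCol (.inl ()) (Sum.elim (B · ()) (B' · ())) := by
    ext (_ | _) (_ | _) <;> simp [C]
  rw [hcol, hcol, ← det_updateCol_add]
  congr 1
  ext (_ | _) (_ | _) <;> simp [C]

end Circulant

/-! ### The determinant of the intertwining operator -/

section FourierDeterminant

open IsotropicLine

lemma prod_eq_zero_mul_prod_units {K N : Type*} [Field K] [Fintype K] [Fintype Kˣ] [CommMonoid N]
    (f : K → N) : ∏ x, f x = f 0 * ∏ x : Kˣ, f x := by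
  classical
  rw [← Finset.mul_prod_erase _ _ (Finset.mem_univ 0)]
  congr 1
  refine (Finset.prod_nbij (fun x : Kˣ ↦ (x : K)) ?_ ?_ ?_ fun _ _ ↦ rfl).symm
  · simp
  · exact fun x _ y _ h ↦ Units.ext h
  · exact fun x hx ↦ ⟨Units.mk0 x (Finset.ne_of_mem_erase hx), by simp, rfl⟩

variable {F N : Type} [Field F] [Field N]

lemma eq_of_addChar_mul_inv_sub {ψ : AddChar F N} (hψ : ψ 1 ≠ 1) {b c : F}
    (h : ψ (b * (b - c)⁻¹) = ψ (c * (b - c)⁻¹)) : b = c := by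
  by_contra hbc
  refine hψ ?_
  rw [← mul_inv_cancel₀ (sub_ne_zero.mpr hbc), sub_mul, AddChar.map_sub_eq_div, h,
    div_self (AddChar.val_isUnit ψ _).ne_zero]

lemma mulShift_injective {ψ : AddChar F N} (hψ : ψ 1 ≠ 1) :
    Function.Injective ψ.mulShift :=
  fun _ _ h ↦ eq_of_addChar_mul_inv_sub hψ (DFunLike.congr_fun h _)

variable [StarRing F]

/-- The restriction of `x ↦ ψ (c * x)` to the skew-adjoint elements, for a skew-adjoint `c`. -/
def skewMulShift (ψ : AddChar F N) (c : skewAdjoint F) : AddChar (skewAdjoint F) N :=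
  (ψ.mulShift (c : F)).compAddMonoidHom (skewAdjoint F).subtype

lemma skewMulShift_apply (ψ : AddChar F N) (c z : skewAdjoint F) :
    skewMulShift ψ c z = ψ (c * z) := rfl

lemma skewMulShift_injective {ψ : AddChar F N} (hψ : ψ 1 ≠ 1) :
    Function.Injective (skewMulShift ψ) := fun b c h ↦
  Subtype.ext <| eq_of_addChar_mul_inv_sub hψ <| DFunLike.congr_fun h
    (⟨(b - c : F)⁻¹, by rw [skewAdjoint.mem_iff, star_inv₀, star_sub, b.2, c.2, neg_sub_neg,
      ← neg_sub (b : F), inv_neg]⟩ :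
      skewAdjoint F)

lemma skewMulShift_zero (ψ : AddChar F N) : skewMulShift ψ 0 = 0 :=
  DFunLike.ext _ _ fun z ↦ by simp [skewMulShift_apply]

variable [Fintype (skewAdjoint F)] (θ : MulChar F N) (ψ : AddChar F N)

/-- The Fourier transform at `b` of `z ↦ θ (z - r / 2)` on the skew-adjoint elements. -/
def kernelFourier (b r : F) : N := ∑ z : skewAdjoint F, ψ (b * z) * θ (z - r / 2)

/-- The eigenvalue of the intertwining operator at the character `x ↦ ψ (b * x)` of the
abelianised unipotent radical. -/
def linearFourier [Fintype F] (b : F) : N :=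
  ∑ y, ψ (b * y) * kernelFourier θ ψ 0 (y * star y)

/-- The block of the intertwining operator at the character `z ↦ ψ (c * z)` of the centre of the
unipotent radical. -/
def heisenbergFourier (c : F) : Matrix F F N :=
  of fun y y' ↦ ψ (-(c * ((star y * y' - y * star y') / 2))) *
    kernelFourier θ ψ c ((y - y') * star (y - y'))

variable {θ ψ}

lemma kernelFourier_mul {s : F} (hs : IsSelfAdjoint s) (hs₀ : s ≠ 0) (b r : F) :
    kernelFourier θ ψ b (s * r) = θ s * kernelFourier θ ψ (b * s) r := by
  have hmem {t : F} (ht : IsSelfAdjoint t) (z : skewAdjoint F) : t * z ∈ skewAdjoint F := by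
    rw [skewAdjoint.mem_iff, star_mul', ht.star_eq, z.2, mul_neg]
  let e : skewAdjoint F ≃ skewAdjoint F :=
    { toFun z := ⟨s * z, hmem hs z⟩
      invFun z := ⟨s⁻¹ * z, hmem hs.inv₀ z⟩
      left_inv z := Subtype.ext (inv_mul_cancel_left₀ hs₀ _)
      right_inv z := Subtype.ext (mul_inv_cancel_left₀ hs₀ _) }
  rw [kernelFourier, kernelFourier, Finset.mul_sum, ← Equiv.sum_comp e]
  refine Finset.sum_congr rfl fun z _ ↦ ?_
  change ψ (b * (s * z)) * θ (s * z - s * r / 2) = _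
  rw [mul_div_assoc, ← mul_sub, map_mul θ, ← mul_assoc b]
  ring

lemma linearFourier_eq [Fintype F] {a : F} (ha : a ≠ 0) (b : F) :
    linearFourier θ ψ b = θ (a * star a) * linearFourier θ ψ (b * a) := by
  rw [linearFourier, linearFourier, Finset.mul_sum, ← Equiv.sum_comp (Equiv.mulLeft₀ a ha)]
  refine Finset.sum_congr rfl fun y _ ↦ ?_
  rw [Equiv.mulLeft₀_apply, star_mul', mul_mul_mul_comm,
    kernelFourier_mul (.mul_star_self a) (by simpa using ha), zero_mul, ← mul_assoc b]
  ring

lemma linearFourier_zero [Fintype F] {a : Fˣ} (ha : θ (a * star (a : F)) ≠ 1) :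
    linearFourier θ ψ 0 = 0 := by
  have h := linearFourier_eq (θ := θ) (ψ := ψ) a.ne_zero 0
  rw [zero_mul, eq_comm] at h
  by_contra hne
  exact ha ((mul_eq_right₀ hne).mp h)

lemma det_heisenbergFourier_eq [Fintype F] [DecidableEq F] {a : F} (ha : a ≠ 0) (c : F) :
    (heisenbergFourier θ ψ c).det =
      θ (a * star a) * (heisenbergFourier θ ψ (c * (a * star a))).det := by
  have hpow : θ (a * star a) ^ Fintype.card F = θ (a * star a) := by
    rw [← map_pow, FiniteField.pow_card]
  rw [← hpow, ← det_smul, ← det_submatrix_equiv_self (Equiv.mulLeft₀ a ha)]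
  congr 1
  ext y y'
  rw [submatrix_apply, Matrix.smul_apply, smul_eq_mul]
  simp only [heisenbergFourier, of_apply, Equiv.mulLeft₀_apply, ← mul_sub a y y', star_mul']
  rw [mul_mul_mul_comm a (y - y'), kernelFourier_mul (.mul_star_self a) (by simpa using ha),
    mul_left_comm]
  congr 4
  ring

/-- The block, of index `z` in the centre of the unipotent radical, of the matrix of the
intertwining operator on the isotropic lines other than `none`. -/
def innerKernel (θ : MulChar F N) (z : F) : Matrix F F N :=
  of fun y y' ↦ θ (z - (y - y') * star (y - y') / 2 + (star y * y' - y * star y') / 2)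

lemma sum_skewMulShift_smul_innerKernel (θ : MulChar F N) (ψ : AddChar F N) (c : skewAdjoint F) :
    ∑ z, skewMulShift ψ c z • innerKernel θ z = heisenbergFourier θ ψ c := by
  ext y y'
  let w : skewAdjoint F := ⟨(star y * y' - y * star y') / 2, by
    rw [skewAdjoint.mem_iff, star_div₀, star_sub, star_mul', star_mul', star_star, star_star,
      star_ofNat]
    ring⟩
  rw [Matrix.sum_apply, ← Equiv.sum_comp (Equiv.subRight w), heisenbergFourier, of_apply,
    kernelFourier, Finset.mul_sum]
  refine Finset.sum_congr rfl fun z _ ↦ ?_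
  rw [Matrix.smul_apply, smul_eq_mul, skewMulShift_apply, innerKernel, of_apply,
    Equiv.subRight_apply, AddSubgroup.coe_sub, mul_sub, sub_eq_neg_add (c * z : F),
    AddChar.map_add_eq_mul, mul_assoc]
  congr 3
  simp only [w]
  ring

omit θ in
lemma sum_skewMulShift (hψ : ψ 1 ≠ 1) {c : skewAdjoint F} (hc : c ≠ 0) :
    ∑ z : skewAdjoint F, ψ (c * z) = 0 := by
  classical
  have h := AddChar.sum_eq_ite (skewMulShift ψ c)
  rwa [if_neg (skewMulShift_zero ψ ▸ (skewMulShift_injective hψ).ne hc)] at h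

variable [Fintype F] [DecidableEq F]

lemma det_heisenbergFourier_zero_add (hψ : ψ 1 ≠ 1) (κ : N) :
    (heisenbergFourier θ ψ 0 + of fun _ _ ↦ κ).det =
      ∏ b, (linearFourier θ ψ b + κ * ∑ y, ψ (b * y)) := by
  have h := det_circulant (mulShift_injective hψ)
    fun y : F ↦ kernelFourier θ ψ 0 (y * star y) + κ
  refine Eq.trans (congrArg det ?_) (h.trans (Finset.prod_congr rfl fun b _ ↦ ?_))
  · ext y y'
    rw [Matrix.add_apply, heisenbergFourier, of_apply, of_apply, of_apply, zero_mul, neg_zero,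
      AddChar.map_zero_eq_one, one_mul, ← neg_sub, star_neg, neg_mul_neg]
  · simp only [linearFourier, AddChar.mulShift_apply, mul_add, Finset.sum_add_distrib,
      Finset.sum_mul, mul_comm κ]

variable [NeZero (2 : F)]

lemma det_pairing_add (hψ : ψ 1 ≠ 1) (κ : N) :
    (of fun p p' : F × skewAdjoint F ↦ θ (pairing (some p) (some p')) + κ).det =
      ∏ c : skewAdjoint F,
        (heisenbergFourier θ ψ c + of fun _ _ ↦ κ * ∑ z : skewAdjoint F, ψ (c * z)).det := by
  have h := det_blockCirculant (skewMulShift_injective hψ)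
    fun z ↦ innerKernel θ z + of fun _ _ ↦ κ
  refine Eq.trans (congrArg det ?_) (h.trans (Finset.prod_congr rfl fun c _ ↦ ?_))
  · ext ⟨y, z⟩ ⟨y', z'⟩
    rw [of_apply, of_apply, pairing_some_some]
    rfl
  · rw [← sum_skewMulShift_smul_innerKernel]
    simp only [smul_add, Finset.sum_add_distrib]
    congr 2
    ext
    simp [Matrix.sum_apply, Finset.sum_mul, mul_comm κ, skewMulShift_apply]

omit [DecidableEq F] in
lemma intertwiner_mulVec (hψ : ψ 1 ≠ 1) :
    intertwiner θ *ᵥ (fun x ↦ x.elim 0 fun p ↦ ψ p.1) =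
      linearFourier θ ψ 1 • fun x ↦ x.elim 0 fun p ↦ ψ p.1 := by
  ext (_ | ⟨y, z⟩)
  · have hsum : ∑ y, ψ y = 0 := AddChar.sum_eq_zero_of_ne_one (AddChar.ne_one_iff.mpr ⟨1, hψ⟩)
    simp [mulVec, dotProduct, intertwiner, Fintype.sum_prod_type, ← Finset.mul_sum, hsum]
  · have hinner (y' : F) : ∑ z' : skewAdjoint F, θ (pairing (some (y, z)) (some (y', z'))) =
        kernelFourier θ ψ 0 ((y - y') * star (y - y')) := by
      have h := congrFun₂ (sum_skewMulShift_smul_innerKernel θ ψ 0) y y'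
      rw [Matrix.sum_apply, skewMulShift_zero, ← Equiv.sum_comp (Equiv.subRight z)] at h
      simpa [heisenbergFourier, innerKernel, pairing_some_some] using h
    simp only [mulVec, dotProduct, intertwiner, of_apply, Fintype.sum_option, Option.elim_none,
      Option.elim_some, mul_zero, zero_add, Fintype.sum_prod_type, ← Finset.sum_mul, hinner,
      Pi.smul_apply, smul_eq_mul, linearFourier]
    rw [← Equiv.sum_comp (Equiv.addLeft y), Finset.sum_mul]
    refine Finset.sum_congr rfl fun y' _ ↦ ?_
    rw [Equiv.coe_addLeft, sub_add_cancel_left, star_neg, neg_mul_neg, AddChar.map_add_eq_mul,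
      one_mul]
    ring

lemma det_intertwiner :
    (intertwiner θ).det =
      (of fun p p' : F × skewAdjoint F ↦ θ (pairing (some p) (some p')) + 0).det -
        (of fun p p' : F × skewAdjoint F ↦ θ (pairing (some p) (some p')) + 1).det := by
  let e : IsotropicLine F ≃ Unit ⊕ (F × skewAdjoint F) :=
    (Equiv.optionEquivSumPUnit _).trans (Equiv.sumComm _ _)
  have h := det_fromBlocks_zero_one_one
    (of fun p p' : F × skewAdjoint F ↦ θ (pairing (some p) (some p')) + 0)
  rw [← det_submatrix_equiv_self e] at h
  refine Eq.trans (congrArg det ?_) (h.trans (congrArg (_ - ·) (congrArg det ?_)))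
  · ext (_ | p) (_ | p') <;> simp [e, intertwiner, MulChar.map_zero]
  · ext
    simp

variable [Fintype (selfAdjoint F)]

omit [Fintype F] [NeZero (2 : F)] in
lemma prod_skewAdjoint {q : ℕ} [IsHermitianField q F] {c : skewAdjoint F} (hc : c ≠ 0) (f : F → N) :
    ∏ z : skewAdjoint F, f z = f 0 * ∏ r : (selfAdjoint F)ˣ, f ((r : selfAdjoint F) * c) := by
  rw [← (IsHermitianField.mul_skewAdjoint_bijective hc).prod_comp, prod_eq_zero_mul_prod_units]
  simp

omit [NeZero (2 : F)] [Fintype (selfAdjoint F)]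

lemma prod_linearFourier :
    ∏ b : Fˣ, linearFourier θ ψ b = linearFourier θ ψ 1 ^ (Fintype.card F - 1) := by
  have hb (b : Fˣ) : linearFourier θ ψ (b⁻¹ : Fˣ) =
      θ (b * star (b : F)) * linearFourier θ ψ 1 := by
    rw [linearFourier_eq b.ne_zero, Units.inv_mul]
  have hprod : ∏ b : Fˣ, θ (b * star (b : F)) = 1 := by
    have h := congrArg Units.val (FiniteField.prod_univ_units_id_eq_neg_one (K := F))
    rw [Units.coe_prod, Units.val_neg, Units.val_one] at h
    have hstar : ∏ b : Fˣ, star (b : F) = -1 := by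
      simpa [starRingEnd_apply] using congrArg (starRingEnd F) h
    rw [← map_prod, Finset.prod_mul_distrib, h, hstar, neg_mul_neg, one_mul, map_one]
  rw [← Equiv.prod_comp (Equiv.inv _)]
  simp only [Equiv.inv_apply, hb, Finset.prod_mul_distrib, hprod, one_mul, Finset.prod_const,
    Finset.card_univ, Fintype.card_units]

variable {q : ℕ} [IsHermitianField q F] [Fintype (selfAdjoint F)]

lemma prod_det_heisenbergFourier (c : skewAdjoint F) :
    ∏ r : (selfAdjoint F)ˣ, (heisenbergFourier θ ψ ((r : selfAdjoint F) * c)).det =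
      θ (-1) * (heisenbergFourier θ ψ c).det ^ (q - 1) := by
  let f : (selfAdjoint F)ˣ →* N :=
    { toFun r := θ (r : selfAdjoint F), map_one' := by simp, map_mul' r s := by simp }
  have hr (r : (selfAdjoint F)ˣ) :
      (heisenbergFourier θ ψ ((r⁻¹ : (selfAdjoint F)ˣ) * c)).det =
        f r * (heisenbergFourier θ ψ c).det := by
    obtain ⟨a, ha⟩ := IsHermitianField.exists_mul_star_eq (F := F)
      (r := Units.mk0 (r : selfAdjoint F) (by simp)) (r : selfAdjoint F).2
    rw [Units.val_mk0] at ha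
    rw [det_heisenbergFourier_eq a.ne_zero, ha, mul_right_comm]
    simp [f]
  rw [← Equiv.prod_comp (Equiv.inv _)]
  simp only [Equiv.inv_apply, hr]
  rw [Finset.prod_mul_distrib, ← map_prod, FiniteField.prod_univ_units_id_eq_neg_one,
    Finset.prod_const, Finset.card_univ, Fintype.card_units, Fintype.card_eq_nat_card,
    IsHermitianField.card_selfAdjoint F]
  simp [f]

omit [Fintype (selfAdjoint F)] in
lemma det_pairing_add_eq (hψ : ψ 1 ≠ 1) {a : Fˣ} (ha : θ (a * star (a : F)) ≠ 1)
    {c : skewAdjoint F} (hc : c ≠ 0) (κ : N) :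
    (of fun p p' : F × skewAdjoint F ↦ θ (pairing (some p) (some p')) + κ).det =
      κ * (q ^ 3 * linearFourier θ ψ 1 ^ (q ^ 2 - 1) *
        (θ (-1) * (heisenbergFourier θ ψ c).det ^ (q - 1))) := by
  have := Fintype.ofFinite (selfAdjoint F)
  have hlin (b : Fˣ) : ∑ y, ψ (b * y) = 0 := by
    refine AddChar.sum_eq_zero_of_ne_one (ψ := ψ.mulShift (b : F)) ?_
    exact AddChar.mulShift_zero ψ ▸ (mulShift_injective hψ).ne b.ne_zero
  have hskew (r : (selfAdjoint F)ˣ) : ∑ z : skewAdjoint F, ψ ((r : selfAdjoint F) * c * z) = 0 :=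
    sum_skewMulShift hψ (c := ⟨(r : selfAdjoint F) * c, by
      rw [skewAdjoint.mem_iff, star_mul', r.1.2, c.2, mul_neg]⟩) fun h ↦ hc <| by
        simpa using congrArg Subtype.val h
  have hzero (A : Matrix F F N) : A + of (fun _ _ ↦ 0) = A := add_zero A
  refine (det_pairing_add hψ κ).trans ((prod_skewAdjoint hc fun z ↦
    (heisenbergFourier θ ψ z + of fun _ _ ↦ κ * ∑ x : skewAdjoint F, ψ (z * x)).det).trans ?_)
  simp only [hskew, mul_zero, hzero, prod_det_heisenbergFourier, zero_mul,
    AddChar.map_zero_eq_one, det_heisenbergFourier_zero_add hψ]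
  rw [prod_eq_zero_mul_prod_units]
  simp only [hlin, mul_zero, add_zero, linearFourier_zero ha, zero_mul, zero_add,
    prod_linearFourier, AddChar.map_zero_eq_one, Finset.sum_const, Finset.card_univ, nsmul_one]
  simp only [Fintype.card_eq_nat_card, IsHermitianField.card_eq F,
    IsHermitianField.card_skewAdjoint F]
  push_cast
  ring

omit [Fintype (selfAdjoint F)] in
theorem det_intertwiner_eq (hψ : ψ 1 ≠ 1) {a : Fˣ} (ha : θ (a * star (a : F)) ≠ 1)
    {c : skewAdjoint F} (hc : c ≠ 0) :
    (intertwiner θ).det = -(q ^ 3 * linearFourier θ ψ 1 ^ (q ^ 2 - 1) *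
      (θ (-1) * (heisenbergFourier θ ψ c).det ^ (q - 1))) := by
  rw [det_intertwiner, det_pairing_add_eq hψ ha hc, det_pairing_add_eq hψ ha hc]
  ring

end FourierDeterminant

/-! ### Absolute values and Galois action of the Fourier coefficients -/

/-- An automorphism `τ` of the coefficient field that twists the inverse of the multiplicative
character `θ` by the involution of `F` and fixes the additive character `ψ`, on a field whose
involution inverts both characters. -/
structure IsTwist {F N : Type} [Field F] [StarRing F] [Field N] [StarRing N] (θ : MulChar F N)
    (ψ : AddChar F N) (τ : N →+* N) : Prop where
  star_mulChar (x : F) : star (θ x) = (θ x)⁻¹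
  star_addChar (x : F) : star (ψ x) = ψ (-x)
  map_mulChar (x : F) : τ (θ x) = (θ (star x))⁻¹
  map_addChar (x : F) : τ (ψ x) = ψ x

section SelfAdjointCharacters

variable {F N : Type} [Field F] [StarRing F] [Field N]

/-- The restriction of a multiplicative character to the field of self-adjoint elements. -/
def selfAdjointMulChar (θ : MulChar F N) : MulChar (selfAdjoint F) N where
  toFun r := θ r
  map_one' := by simp
  map_mul' r s := by simp
  map_nonunit' r hr := θ.map_nonunit fun h ↦
    hr (isUnit_iff_ne_zero.mpr fun hr₀ ↦ by simp [hr₀] at h)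

lemma selfAdjointMulChar_apply (θ : MulChar F N) (r : selfAdjoint F) :
    selfAdjointMulChar θ r = θ r := rfl

/-- The restriction of an additive character to the field of self-adjoint elements. -/
def selfAdjointAddChar (ψ : AddChar F N) : AddChar (selfAdjoint F) N :=
  ψ.compAddMonoidHom (selfAdjoint F).subtype

lemma selfAdjointAddChar_apply (ψ : AddChar F N) (r : selfAdjoint F) :
    selfAdjointAddChar ψ r = ψ r := rfl

lemma selfAdjointAddChar_isPrimitive {ψ : AddChar F N} (hψ : ψ 1 ≠ 1) :
    (selfAdjointAddChar ψ).IsPrimitive :=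
  AddChar.IsPrimitive.of_ne_one <| AddChar.ne_one_iff.mpr ⟨1, hψ⟩

lemma selfAdjointMulChar_ne_one {θ : MulChar F N} {a : Fˣ}
    (ha : θ (a * star (a : F)) ≠ 1) : selfAdjointMulChar θ ≠ 1 := by
  let r : selfAdjoint F := ⟨a * star (a : F), .mul_star_self _⟩
  have hr : r ≠ 0 := by
    rw [← Subtype.coe_ne_coe]
    simp [r]
  exact fun h ↦ ha <| (DFunLike.congr_fun h r).trans (MulChar.one_apply (isUnit_iff_ne_zero.mpr hr))

end SelfAdjointCharacters

section GaussSums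

variable {K N : Type} [Field K] [Fintype K] [Field N] {σ : N →+* N} {χ : MulChar K N}
  {ψ : AddChar K N}

lemma map_gaussSum {χ' : MulChar K N} {ψ' : AddChar K N} (hχ : ∀ x, σ (χ x) = χ' x)
    (hψ : ∀ x, σ (ψ x) = ψ' x) : σ (gaussSum χ ψ) = gaussSum χ' ψ' := by
  simp only [gaussSum, map_sum, map_mul, hχ, hψ]

lemma mul_map_gaussSum {j : Kˣ} (hχ : ∀ x, σ (χ x) = χ x) (hψ : ∀ x, σ (ψ x) = ψ (j * x)) :
    χ j * σ (gaussSum χ ψ) = gaussSum χ ψ := by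
  rw [map_gaussSum (ψ' := ψ.mulShift j) hχ hψ, gaussSum_mulShift]

variable [DecidableEq K]

/-- The quadratic Gauss sum of an additive character. -/
def quadraticGaussSum (ψ : AddChar K N) : N :=
  gaussSum ((quadraticChar K).ringHomComp (Int.castRingHom N)) ψ

lemma mul_map_quadraticGaussSum {j : Kˣ} (hψ : ∀ x, σ (ψ x) = ψ (j * x)) :
    quadraticChar K j * σ (quadraticGaussSum ψ) = quadraticGaussSum ψ :=
  mul_map_gaussSum (χ := (quadraticChar K).ringHomComp (Int.castRingHom N))
    (fun _ ↦ map_intCast σ _) hψ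

lemma quadraticGaussSum_sq [CharZero N] (hK : ringChar K ≠ 2) (hψ : ψ.IsPrimitive) :
    quadraticGaussSum ψ ^ 2 = quadraticChar K (-1) * Fintype.card K :=
  gaussSum_sq ((MulChar.ringHomComp_ne_one_iff (RingHom.injective_int _)).mpr
    (quadraticChar_ne_one hK)) ((quadraticChar_isQuadratic K).comp _) hψ

end GaussSums

section Twist

variable {F N : Type} [Field F] [StarRing F] [Field N] [StarRing N]
  [Fintype (skewAdjoint F)] {θ : MulChar F N} {ψ : AddChar F N} {τ : N →+* N}

namespace IsTwist

variable (h : IsTwist θ ψ τ)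
include h

lemma map_kernelFourier (b : F) {r : F} (hr : IsSelfAdjoint r) :
    τ (kernelFourier θ ψ b r) = star (kernelFourier θ ψ b r) := by
  rw [kernelFourier, map_sum, star_sum, ← Equiv.sum_comp (Equiv.neg _)]
  refine Finset.sum_congr rfl fun z _ ↦ ?_
  rw [map_mul, star_mul', h.map_addChar, h.map_mulChar, h.star_addChar, h.star_mulChar, star_sub,
    star_div₀, star_ofNat, hr.star_eq]
  simp

variable [Fintype F]

lemma map_linearFourier (b : F) : τ (linearFourier θ ψ b) = star (linearFourier θ ψ b) := by
  rw [linearFourier, map_sum, star_sum, ← Equiv.sum_comp (Equiv.neg _)]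
  refine Finset.sum_congr rfl fun y _ ↦ ?_
  rw [map_mul, star_mul', h.map_addChar, h.star_addChar, Equiv.neg_apply, star_neg, neg_mul_neg,
    mul_neg, h.map_kernelFourier _ (.mul_star_self y)]

variable [DecidableEq F]

lemma map_det_heisenbergFourier (c : F) :
    τ (heisenbergFourier θ ψ c).det = star (heisenbergFourier θ ψ c).det := by
  have hmap : (heisenbergFourier θ ψ c).map τ = (heisenbergFourier θ ψ c)ᴴ := by
    ext y y'
    rw [map_apply, conjTranspose_apply, heisenbergFourier, of_apply, of_apply, map_mul, star_mul',
      h.map_addChar, h.star_addChar, h.map_kernelFourier _ (.mul_star_self _), ← neg_sub y',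
      star_neg, neg_mul_neg]
    congr 2
    ring
  rw [← det_conjTranspose, ← hmap, RingHom.map_det, RingHom.mapMatrix_apply]

lemma linearFourier_mul_star [NeZero (2 : F)] (hψ : ψ 1 ≠ 1) (hττ : ∀ x, τ (τ x) = x)
    (hρ : HasScalarCommutant (principalSeries θ)) :
    linearFourier θ ψ 1 * star (linearFourier θ ψ 1) = Fintype.card (F × skewAdjoint F) := by
  let v : IsotropicLine F → N := fun x ↦ x.elim 0 fun p ↦ ψ p.1
  have hv : τ ∘ v = v := by
    ext (_ | p)
    exacts [map_zero τ, h.map_addChar _]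
  have hA : intertwiner θ *ᵥ v = linearFourier θ ψ 1 • v := intertwiner_mulVec hψ
  have hAτ : (intertwiner θ).map τ *ᵥ v = star (linearFourier θ ψ 1) • v := by
    ext x
    rw [← h.map_linearFourier, Pi.smul_apply, ← hv, ← RingHom.map_mulVec, hA]
    simp
  have hAA := congrArg (· *ᵥ v) (map_intertwiner_mul_intertwiner h.map_mulChar hττ hρ)
  simp only [← mulVec_mulVec, hA, mulVec_smul, hAτ, smul_mulVec, one_mulVec] at hAA
  simpa [v] using congrFun hAA (some (0, 0))

variable [Fintype (selfAdjoint F)]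

omit [Fintype (skewAdjoint F)] [Fintype F] [DecidableEq F]

lemma gaussSum_mul_star {a : Fˣ} (ha : θ (a * star (a : F)) ≠ 1) (hψ : ψ 1 ≠ 1) :
    gaussSum (selfAdjointMulChar θ) (selfAdjointAddChar ψ) *
      star (gaussSum (selfAdjointMulChar θ) (selfAdjointAddChar ψ)) =
        Fintype.card (selfAdjoint F) := by
  rw [← gaussSum_mul_gaussSum_eq_card (selfAdjointMulChar_ne_one ha)
    (selfAdjointAddChar_isPrimitive hψ)]
  congr 1
  refine map_gaussSum (σ := starRingEnd N) (fun r ↦ ?_) fun r ↦ ?_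
  · rw [MulChar.inv_apply_eq_inv', selfAdjointMulChar_apply, starRingEnd_apply, h.star_mulChar]
  · rw [AddChar.inv_apply, selfAdjointAddChar_apply, starRingEnd_apply, h.star_addChar]
    rfl

lemma map_gaussSum_sq :
    τ (gaussSum (selfAdjointMulChar θ) (selfAdjointAddChar ψ) ^ 2) =
      star (gaussSum (selfAdjointMulChar θ) (selfAdjointAddChar ψ) ^ 2) := by
  have hτ := map_gaussSum (σ := τ) (χ := selfAdjointMulChar θ) (χ' := (selfAdjointMulChar θ)⁻¹)
    (ψ := selfAdjointAddChar ψ) (ψ' := selfAdjointAddChar ψ)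
    (fun r ↦ by rw [MulChar.inv_apply_eq_inv', selfAdjointMulChar_apply, h.map_mulChar,
      r.2.star_eq]) fun r ↦ h.map_addChar _
  have hstar := map_gaussSum (σ := starRingEnd N) (χ := selfAdjointMulChar θ)
    (χ' := (selfAdjointMulChar θ)⁻¹) (ψ := selfAdjointAddChar ψ)
    (ψ' := (selfAdjointAddChar ψ)⁻¹)
    (fun r ↦ by rw [MulChar.inv_apply_eq_inv', selfAdjointMulChar_apply, starRingEnd_apply,
      h.star_mulChar]) fun r ↦ by
      rw [AddChar.inv_apply, selfAdjointAddChar_apply, starRingEnd_apply, h.star_addChar]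
      rfl
  rw [map_pow, star_pow, hτ, ← starRingEnd_apply, hstar, ← mul_gaussSum_inv_eq_gaussSum, mul_pow,
    ← map_pow, neg_one_sq, map_one, one_mul]

variable [DecidableEq F]

lemma map_quadraticGaussSum :
    τ (quadraticGaussSum (selfAdjointAddChar ψ)) = quadraticGaussSum (selfAdjointAddChar ψ) := by
  simpa using mul_map_quadraticGaussSum (σ := τ) (j := 1) (ψ := selfAdjointAddChar ψ) fun r ↦ by
    rw [selfAdjointAddChar_apply, h.map_addChar, Units.val_one, one_mul, selfAdjointAddChar_apply]

lemma mul_star_quadraticGaussSum :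
    quadraticChar (selfAdjoint F) (-1) * star (quadraticGaussSum (selfAdjointAddChar ψ)) =
      quadraticGaussSum (selfAdjointAddChar ψ) :=
  mul_map_quadraticGaussSum (σ := starRingEnd N) (j := -1) (ψ := selfAdjointAddChar ψ) fun r ↦ by
    rw [selfAdjointAddChar_apply, starRingEnd_apply, h.star_addChar, Units.val_neg, Units.val_one,
      neg_one_mul, selfAdjointAddChar_apply, NegMemClass.coe_neg]

end IsTwist

end Twist

section GaloisAction

variable {F N : Type} [Field F] [StarRing F] [Field N] [Fintype (skewAdjoint F)]
  {θ : MulChar F N} {ψ : AddChar F N} {σ : N →+* N}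
  {j : selfAdjoint F} (hσθ : ∀ x, σ (θ x) = θ x)
  (hσψ : ∀ x, σ (ψ x) = ψ (j * x))
include hσθ hσψ

lemma map_kernelFourier (b r : F) :
    σ (kernelFourier θ ψ b r) = kernelFourier θ ψ (j * b) r := by
  simp only [kernelFourier, map_sum, map_mul σ, hσθ, hσψ, mul_assoc]

variable [Fintype F] (hj : j ≠ 0)
include hj

lemma mul_map_linearFourier : θ (j * j) * σ (linearFourier θ ψ 1) = linearFourier θ ψ 1 := by
  have hσ : σ (linearFourier θ ψ 1) = linearFourier θ ψ j := by
    simp only [linearFourier, map_sum, map_mul σ, hσψ, map_kernelFourier hσθ hσψ, one_mul,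
      mul_zero]
  have h := linearFourier_eq (θ := θ) (ψ := ψ) (a := j) (Subtype.coe_ne_coe.mpr hj) 1
  rw [hσ, h, one_mul, j.2.star_eq]

lemma mul_map_det_heisenbergFourier {q : ℕ} [IsHermitianField q F] [DecidableEq F] (c : F) :
    θ j * σ (heisenbergFourier θ ψ c).det = (heisenbergFourier θ ψ c).det := by
  have hσ : (heisenbergFourier θ ψ c).map σ = heisenbergFourier θ ψ (c * j) := by
    ext y y'
    rw [map_apply, heisenbergFourier, heisenbergFourier, of_apply, of_apply, map_mul, hσψ,
      map_kernelFourier hσθ hσψ, mul_neg, mul_comm c (j : F), mul_assoc]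
  have hj' : (j : F) ≠ 0 := Subtype.coe_ne_coe.mpr hj
  obtain ⟨a, ha⟩ := IsHermitianField.exists_mul_star_eq (F := F) (r := Units.mk0 (j : F) hj') j.2
  rw [RingHom.map_det, RingHom.mapMatrix_apply, hσ, det_heisenbergFourier_eq a.ne_zero c, ha,
    Units.val_mk0]

end GaloisAction

/-! ### The normalised intertwining operator -/

section Normalisation

variable {q : ℕ} {F N : Type} [Field F] [StarRing F] [IsHermitianField q F] [Field N]
  [Fintype F] [DecidableEq F] [Fintype (selfAdjoint F)] [Fintype (skewAdjoint F)]

/-- The eigenvalue of the intertwining operator divided by the square of a Gauss sum. Cubing it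
gives a scalar of absolute value `q ^ (3 / 2)`, by which the intertwining operator is divided to
become unitary. -/
def unitarizer (θ : MulChar F N) (ψ : AddChar F N) : N :=
  linearFourier θ ψ 1 / gaussSum (selfAdjointMulChar θ) (selfAdjointAddChar ψ) ^ 2

/-- A square root of `q ^ u * det (intertwiner θ)`, up to a power of `q` and a sign. -/
def sqrtDet (q : ℕ) (θ : MulChar F N) (ψ : AddChar F N) (c : F) (u : ℕ) : N :=
  linearFourier θ ψ 1 ^ (q ^ 2 / 2) * (heisenbergFourier θ ψ c).det ^ (q / 2) *
    quadraticGaussSum (selfAdjointAddChar ψ) ^ u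

variable {θ : MulChar F N} {ψ : AddChar F N}

omit [IsHermitianField q F] [Fintype F] [Fintype (skewAdjoint F)] in
variable (F) in
lemma quadraticChar_neg_one_pow (u : ℕ) :
    ((quadraticChar (selfAdjoint F) (-1) : ℤ) : N) ^ u *
      ((quadraticChar (selfAdjoint F) (-1) : ℤ) : N) ^ u = 1 := by
  rw [← mul_pow, ← Int.cast_mul, ← map_mul, neg_mul_neg, one_mul, map_one, Int.cast_one, one_pow]

omit [IsHermitianField q F] [DecidableEq F] [Fintype F] [Fintype (selfAdjoint F)]
  [Fintype (skewAdjoint F)] in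
variable (F) in
lemma ringChar_selfAdjoint_ne_two {q : ℕ} [IsHermitianField q F] :
    ringChar (selfAdjoint F) ≠ 2 := fun h ↦ by
  have := Fintype.ofFinite (selfAdjoint F)
  have heven := FiniteField.even_card_of_char_two h
  rw [Fintype.card_eq_nat_card, IsHermitianField.card_selfAdjoint F, ← Nat.even_iff] at heven
  exact Nat.not_even_iff_odd.mpr (IsHermitianField.odd F) heven

lemma sqrtDet_sq [CharZero N] (hψ : ψ 1 ≠ 1) {a : Fˣ} (ha : θ (a * star (a : F)) ≠ 1)
    {c : skewAdjoint F} (hc : c ≠ 0) (u : ℕ) :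
    q ^ 3 * sqrtDet q θ ψ c u ^ 2 = -(θ (-1) *
      ((quadraticChar (selfAdjoint F) (-1) : ℤ) : N) ^ u * q ^ u * (intertwiner θ).det) := by
  have hodd := IsHermitianField.odd F
  have hq : 2 * (q / 2) = q - 1 := by have := Nat.two_mul_div_two_add_one_of_odd hodd; lia
  have hq2 : 2 * (q ^ 2 / 2) = q ^ 2 - 1 := by
    have := Nat.two_mul_div_two_add_one_of_odd (hodd.pow (n := 2)); lia
  have hθ : θ (-1) * θ (-1) = 1 := by rw [← map_mul, neg_mul_neg, one_mul, map_one]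
  rw [sqrtDet, mul_pow, mul_pow, ← pow_mul', ← pow_mul', hq, hq2, ← pow_mul, mul_comm u, pow_mul,
    quadraticGaussSum_sq (ringChar_selfAdjoint_ne_two F) (selfAdjointAddChar_isPrimitive hψ),
    mul_pow, Fintype.card_eq_nat_card, IsHermitianField.card_selfAdjoint F,
    det_intertwiner_eq hψ ha hc]
  linear_combination -(q ^ 3 * linearFourier θ ψ 1 ^ (q ^ 2 - 1) *
    (heisenbergFourier θ ψ c).det ^ (q - 1) *
    ((quadraticChar (selfAdjoint F) (-1) : ℤ) : N) ^ u * q ^ u) * hθ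

section Galois

variable {σ : N →+* N} {j : selfAdjoint F} (hσθ : ∀ x, σ (θ x) = θ x)
  (hσψ : ∀ x, σ (ψ x) = ψ (j * x)) (hj : j ≠ 0)
include hσθ hσψ hj

omit [IsHermitianField q F] [DecidableEq F] in
lemma map_unitarizer : σ (unitarizer θ ψ) = unitarizer θ ψ := by
  have hg := mul_map_gaussSum (σ := σ) (χ := selfAdjointMulChar θ) (ψ := selfAdjointAddChar ψ)
    (j := Units.mk0 j hj) (fun _ ↦ hσθ _) fun _ ↦ hσψ _
  have hlin := mul_map_linearFourier hσθ hσψ hj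
  have hθ : selfAdjointMulChar θ j ≠ 0 := ((isUnit_iff_ne_zero.mpr hj).map _).ne_zero
  rw [map_mul, ← selfAdjointMulChar_apply] at hlin
  rw [unitarizer, map_div₀, map_pow]
  nth_rw 2 [← hlin, ← hg]
  rw [Units.val_mk0, mul_pow, ← sq, mul_div_mul_left _ _ (pow_ne_zero 2 hθ)]

omit [Fintype F] [DecidableEq F] [Fintype (skewAdjoint F)] hσθ hσψ in
lemma mulChar_pow_half {u : ℕ} (hu : θ (-1) = (-1) ^ u) [DecidableEq (selfAdjoint F)] :
    θ j ^ (q / 2) = ((quadraticChar (selfAdjoint F) j : ℤ) : N) ^ u := by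
  have hpow := quadraticChar_eq_pow_of_char_ne_two' (ringChar_selfAdjoint_ne_two F) j
  rw [Fintype.card_eq_nat_card, IsHermitianField.card_selfAdjoint F] at hpow
  have hpow' : (j : F) ^ (q / 2) = ((quadraticChar (selfAdjoint F) j : ℤ) : F) := by
    exact (congrArg (selfAdjoint F).subtype hpow.symm).trans rfl
  rw [← map_pow, hpow']
  obtain h | h := quadraticChar_dichotomy hj <;> simp [h, hu]

lemma map_sqrtDet {u : ℕ} (hu : θ (-1) = (-1) ^ u) (c : F) :
    σ (sqrtDet q θ ψ c u) = sqrtDet q θ ψ c u := by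
  have hj' : (j : F) ≠ 0 := Subtype.coe_ne_coe.mpr hj
  have hlin := congrArg (· ^ (q ^ 2 / 2)) (mul_map_linearFourier hσθ hσψ hj)
  have hdet := congrArg (· ^ (q / 2)) (mul_map_det_heisenbergFourier hσθ hσψ hj c)
  have hγ := congrArg (· ^ u) (mul_map_quadraticGaussSum (σ := σ) (ψ := selfAdjointAddChar ψ)
    (j := Units.mk0 j hj) fun _ ↦ hσψ _)
  have hη : ((quadraticChar (selfAdjoint F) j : ℤ) : N) ^ u *
      ((quadraticChar (selfAdjoint F) j : ℤ) : N) ^ u = 1 := by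
    rw [← mul_pow, ← Int.cast_mul, ← sq, quadraticChar_sq_one hj, Int.cast_one, one_pow]
  have hθ : θ (j * j) ^ (q ^ 2 / 2) = 1 := by
    have hodd := Nat.two_mul_div_two_add_one_of_odd ((IsHermitianField.odd F).pow (n := 2))
    have hone := congrArg Units.val (IsHermitianField.pow_sq_sub_one (Units.mk0 (j : F) hj'))
    rw [Units.val_pow_eq_pow_val, Units.val_mk0, Units.val_one] at hone
    rw [← map_pow, ← sq, ← pow_mul, show 2 * (q ^ 2 / 2) = q ^ 2 - 1 by lia, hone, map_one]
  simp only [mul_pow, hθ, mulChar_pow_half hj hu, one_mul, Units.val_mk0] at hlin hdet hγ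
  rw [sqrtDet, map_mul, map_mul, map_pow, map_pow, map_pow, hlin]
  rw [← hdet, ← hγ]
  linear_combination
    -(linearFourier θ ψ 1 ^ (q ^ 2 / 2) * σ (heisenbergFourier θ ψ c).det ^ (q / 2) *
    σ (quadraticGaussSum (selfAdjointAddChar ψ)) ^ u) * hη

end Galois

namespace IsTwist

variable [StarRing N] [CharZero N] {τ : N →+* N} (h : IsTwist θ ψ τ)
include h

omit [IsHermitianField q F] [DecidableEq F] [CharZero N] in
lemma map_unitarizer : τ (unitarizer θ ψ) = star (unitarizer θ ψ) := by
  rw [unitarizer, map_div₀, star_div₀, h.map_linearFourier, h.map_gaussSum_sq]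

omit [IsHermitianField q F] [CharZero N] in
lemma map_sqrtDet (c : F) (u : ℕ) :
    τ (sqrtDet q θ ψ c u) =
      ((quadraticChar (selfAdjoint F) (-1) : ℤ) : N) ^ u * star (sqrtDet q θ ψ c u) := by
  have hγ := congrArg (· ^ u) h.mul_star_quadraticGaussSum
  simp only [mul_pow] at hγ
  simp only [sqrtDet, map_mul, map_pow, star_mul', star_pow, h.map_linearFourier,
    h.map_det_heisenbergFourier, h.map_quadraticGaussSum]
  rw [← hγ]
  ring

variable (hψ : ψ 1 ≠ 1) (hττ : ∀ x, τ (τ x) = x) {a : Fˣ} (ha : θ (a * star (a : F)) ≠ 1)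
include hψ hττ ha

omit [DecidableEq F] in
lemma unitarizer_mul_star : unitarizer θ ψ * star (unitarizer θ ψ) = q := by
  classical
  have hq : (q : N) ≠ 0 := Nat.cast_ne_zero.mpr (IsHermitianField.one_lt F).ne_bot
  have hlin := h.linearFourier_mul_star hψ hττ (principalSeries_hasScalarCommutant ha)
  have hg := h.gaussSum_mul_star ha hψ
  rw [Fintype.card_eq_nat_card, IsHermitianField.card_selfAdjoint F] at hg
  rw [Fintype.card_eq_nat_card, IsHermitianField.card_prod_skewAdjoint F] at hlin
  rw [unitarizer, star_div₀, star_pow, div_mul_div_comm, ← mul_pow, hlin, hg]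
  field_simp
  push_cast
  ring

omit hψ [Fintype (selfAdjoint F)] [CharZero N] in
lemma star_det_intertwiner_mul_det :
    star (intertwiner θ).det * (intertwiner θ).det = (q ^ 3) ^ (q ^ 3 + 1) := by
  have hAA := congrArg det (map_intertwiner_mul_intertwiner h.map_mulChar hττ
    (principalSeries_hasScalarCommutant ha))
  rw [map_intertwiner h.map_mulChar h.star_mulChar, det_mul, det_conjTranspose, det_smul, det_one,
    mul_one, Fintype.card_option, Fintype.card_eq_nat_card,
    IsHermitianField.card_prod_skewAdjoint F] at hAA
  exact_mod_cast hAA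

lemma sqrtDet_mul_star (ι : N →+* ℂ) (hι : ∀ x, ι (star x) = star (ι x)) {c : skewAdjoint F}
    (hc : c ≠ 0) (u : ℕ) :
    q ^ 3 * (sqrtDet q θ ψ c u * star (sqrtDet q θ ψ c u)) =
      q ^ u * (q ^ 3) ^ ((q ^ 3 + 1) / 2) := by
  set w := sqrtDet q θ ψ c u
  have hhalf : 2 * ((q ^ 3 + 1) / 2) = q ^ 3 + 1 :=
    Nat.two_mul_div_two_of_even ((IsHermitianField.odd F).pow.add_one)
  have hw := sqrtDet_sq hψ ha hc u
  have hθ : θ (-1) * star (θ (-1)) = 1 := by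
    rw [h.star_mulChar, mul_inv_cancel₀ (isUnit_one.neg.map θ).ne_zero]
  have hε := quadraticChar_neg_one_pow (N := N) F u
  have hsq : (q ^ 3 * (w * star w)) ^ 2 = (q ^ u * (q ^ 3) ^ ((q ^ 3 + 1) / 2)) ^ 2 := by
    have hw' := congrArg star hw
    simp only [star_mul', star_neg, star_pow, star_natCast, star_intCast] at hw'
    calc
      _ = q ^ 3 * w ^ 2 * (q ^ 3 * star w ^ 2) := by ring
      _ = θ (-1) * star (θ (-1)) * (((quadraticChar (selfAdjoint F) (-1) : ℤ) : N) ^ u *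
            ((quadraticChar (selfAdjoint F) (-1) : ℤ) : N) ^ u) * (q ^ u) ^ 2 *
            (star (intertwiner θ).det * (intertwiner θ).det) := by rw [hw, hw']; ring
      _ = _ := by
        rw [hθ, hε, h.star_det_intertwiner_mul_det hττ ha, mul_pow, ← pow_mul' (q ^ 3 : N), hhalf,
          one_mul, one_mul]
  have hreal : ι (q ^ 3 * (w * star w)) = ((q ^ 3 * Complex.normSq (ι w) : ℝ) : ℂ) := by
    rw [map_mul, map_mul ι w, hι, Complex.star_def, Complex.mul_conj]
    simp
  refine ι.injective ?_
  have hsq' := congrArg ι hsq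
  rw [map_pow, hreal, map_pow] at hsq'
  rw [hreal]
  simp only [map_mul, map_pow, map_natCast] at hsq' ⊢
  norm_cast at hsq' ⊢
  rw [Nat.cast_pow (_ * _)] at hsq'
  exact (pow_left_inj₀ (mul_nonneg (by positivity) (Complex.normSq_nonneg _)) (by positivity)
    two_ne_zero).mp hsq'

end IsTwist

end Normalisation

lemma map_mulChar_of_mul_star_eq_neg_one {F M : Type} [Field F] [StarRing F] [Field M]
    {θ : MulChar F M} {τ : M →+* M} (hτθ : ∀ x, τ (θ x) = (θ (star x))⁻¹) {x : F}
    (hx : x * star x = -1) : τ (θ x) = θ (-1) * θ x := by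
  have hone : θ (-1) * θ x * θ (star x) = 1 := by
    rw [mul_assoc, ← map_mul, ← map_mul, hx, neg_mul_neg, one_mul, map_one]
  rw [hτθ, inv_eq_of_mul_eq_one_left hone]

section UnitaryIntertwiner

variable {q : ℕ} {F M N : Type} [Field F] [StarRing F] [IsHermitianField q F] [Fintype F]
  [DecidableEq F] [Fintype (selfAdjoint F)] [Fintype (skewAdjoint F)] [Field M] [StarRing M]
  [CharZero M] {θ : MulChar F M} {τ : M →+* M}

/-- An operator `B` intertwining the principal series with its `τ`-twist, normalised to be
unitary, together with a scalar `v` of absolute value squared `q ^ (u - 3)` describing the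
determinant of `B`. -/
structure IsUnitaryIntertwiner (θ : MulChar F M) (τ : M →+* M) (u : ℕ)
    (B : Matrix (IsotropicLine F) (IsotropicLine F) M) (v : M) : Prop where
  mul_principalSeries (g : specialUnitary F) :
    B * principalSeries θ g = (principalSeries θ g).map τ * B
  map_eq : B.map τ = Bᴴ
  conjTranspose_mul_self : Bᴴ * B = 1
  det_mul_map : B.det * τ v = -v
  mul_star : q ^ 3 * (v * star v) = q ^ u

omit [Fintype (selfAdjoint F)] in
lemma isUnitaryIntertwiner_smul (hτθ : ∀ x, τ (θ x) = (θ (star x))⁻¹)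
    (hθ : ∀ x, star (θ x) = (θ x)⁻¹) (hττ : ∀ x, τ (τ x) = x)
    {a : Fˣ} (ha : θ (a * star (a : F)) ≠ 1) {x : F} (hx : x * star x = -1) {u : ℕ} {e w ε : M}
    (he : e * star e = q) (hτe : τ e = star e)
    (hw : q ^ 3 * w ^ 2 = -(θ (-1) * ε * q ^ u * (intertwiner θ).det))
    (hτw : τ w = ε * star w) (hww : q ^ 3 * (w * star w) = q ^ u * (q ^ 3) ^ ((q ^ 3 + 1) / 2)) :
    IsUnitaryIntertwiner θ τ u ((e ^ 3)⁻¹ • intertwiner θ)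
      (θ x * w / (e ^ 3) ^ ((q ^ 3 + 1) / 2)) := by
  set k := (q ^ 3 + 1) / 2
  have hcard : Fintype.card (IsotropicLine F) = k * 2 := by
    rw [Fintype.card_option, Fintype.card_eq_nat_card, IsHermitianField.card_prod_skewAdjoint F,
      Nat.div_two_mul_two_of_even ((IsHermitianField.odd F).pow.add_one)]
  have hq : (q : M) ≠ 0 := Nat.cast_ne_zero.mpr (IsHermitianField.one_lt F).ne_bot
  have hx₀ : θ x * star (θ x) = 1 := by
    rw [hθ, mul_inv_cancel₀ ((isUnit_iff_ne_zero.mpr fun h₀ ↦ ?_).map θ).ne_zero]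
    simp [h₀] at hx
  set y := (e ^ 3) ^ k
  have hy : y * star y = (q ^ 3) ^ k := by
    rw [star_pow, star_pow, ← mul_pow, ← mul_pow, he]
  have hyq : (q ^ 3 : M) ^ k ≠ 0 := pow_ne_zero _ (pow_ne_zero _ hq)
  have hmap : ((e ^ 3)⁻¹ • intertwiner θ).map τ = ((e ^ 3)⁻¹ • intertwiner θ)ᴴ := by
    rw [conjTranspose_smul, ← map_intertwiner hτθ hθ]
    ext
    simp [hτe]
  refine ⟨fun g ↦ ?_, hmap, ?_, ?_, ?_⟩
  · rw [Matrix.smul_mul, intertwiner_mul_principalSeries hτθ, Matrix.mul_smul]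
  · have hAA := map_intertwiner_mul_intertwiner hτθ hττ (principalSeries_hasScalarCommutant ha)
    rw [Fintype.card_eq_nat_card, IsHermitianField.card_prod_skewAdjoint F,
      map_intertwiner hτθ hθ] at hAA
    rw [conjTranspose_smul, Matrix.smul_mul, Matrix.mul_smul, hAA, smul_smul, smul_smul, star_inv₀,
      star_pow, ← mul_inv, ← mul_pow, mul_comm (star e), he, Nat.cast_pow,
      inv_mul_cancel₀ (pow_ne_zero 3 hq), one_smul]
  · have hkey : (intertwiner θ).det * (θ (-1) * (ε * star w)) = -(w * (q ^ 3) ^ k) := by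
      refine mul_left_cancel₀ (pow_ne_zero u hq) ?_
      linear_combination star w * hw - w * hww
    have hy₀ : y ≠ 0 := left_ne_zero_of_mul (hy ▸ hyq)
    have hy₁ : star y ≠ 0 := right_ne_zero_of_mul (hy ▸ hyq)
    have hτy : τ y = star y := by simp only [y, map_pow, star_pow, hτe]
    have hdet : ((e ^ 3)⁻¹) ^ (k * 2) = (y ^ 2)⁻¹ := by rw [inv_pow, pow_mul]
    rw [det_smul, hcard, hdet, map_div₀, map_mul, hτy, hτw,
      map_mulChar_of_mul_star_eq_neg_one hτθ hx]
    rw [← hy] at hkey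
    clear_value y
    field_simp
    linear_combination θ x * hkey
  · rw [star_div₀, star_mul', div_mul_div_comm, hy, mul_mul_mul_comm, hx₀, one_mul,
      ← mul_div_assoc, hww, mul_div_cancel_right₀ _ hyq]

omit [Fintype (selfAdjoint F)] [StarRing M] [CharZero M] in
lemma det_intertwiner_ringHomComp {N : Type} [Field N] (i : M →+* N) (θ : MulChar F M) :
    (intertwiner (θ.ringHomComp i)).det = i (intertwiner θ).det :=
  (i.map_det _).symm

/-- The scalars entering the unitary normalisation are defined over `N`, which contains the values
of `ψ`, but they lie in the subfield `M`. -/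
theorem exists_isUnitaryIntertwiner {N : Type} [Field N] [StarRing N] [CharZero N] {i : M →+* N}
    (hi : ∀ x, i (star x) = star (i x)) {ψ : AddChar F N} {τ' : N →+* N}
    (hτ' : ∀ x, i (τ x) = τ' (i x)) (h : IsTwist (θ.ringHomComp i) ψ τ') (hψ : ψ 1 ≠ 1)
    (hττ : ∀ x, τ' (τ' x) = x) {a : Fˣ} (ha : θ (a * star (a : F)) ≠ 1)
    (ι : N →+* ℂ) (hι : ∀ x, ι (star x) = star (ι x)) {c : skewAdjoint F} (hc : c ≠ 0) {u : ℕ}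
    (hE : unitarizer (θ.ringHomComp i) ψ ∈ i.range)
    (hW : sqrtDet q (θ.ringHomComp i) ψ c u ∈ i.range) :
    ∃ B v, IsUnitaryIntertwiner θ τ u B v := by
  obtain ⟨e, he⟩ := hE
  obtain ⟨w, hw⟩ := hW
  obtain ⟨x, hx⟩ := IsHermitianField.exists_mul_star_eq (F := F) (r := -1) (by simp)
  have ha' : (θ.ringHomComp i) (a * star (a : F)) ≠ 1 := fun h₁ ↦
    ha (i.injective (h₁.trans i.map_one.symm))
  refine ⟨_, _, isUnitaryIntertwiner_smul (x := x) (u := u) (e := e) (w := w)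
    (ε := ((quadraticChar (selfAdjoint F) (-1) : ℤ) : M) ^ u) (fun y ↦ i.injective ?_)
    (fun y ↦ i.injective ?_) (fun y ↦ i.injective ?_) ha ?_ (i.injective ?_) (i.injective ?_)
    (i.injective ?_) (i.injective ?_) (i.injective ?_)⟩
  · simpa [hτ'] using h.map_mulChar y
  · simpa [hi] using h.star_mulChar y
  · rw [hτ', hτ', hττ]
  · simpa using hx
  · simpa [hi, he] using h.unitarizer_mul_star hψ hττ ha'
  · rw [hτ', hi, he, h.map_unitarizer]
  · simpa [hw, det_intertwiner_ringHomComp] using sqrtDet_sq hψ ha' hc u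
  · simpa [hτ', hi, hw] using h.map_sqrtDet c u
  · simpa [hi, hw] using h.sqrtDet_mul_star hψ hττ ha' ι hι hc u

end UnitaryIntertwiner

/-! ### Hermitian forms on twisted forms of a unitary representation -/

section Descent

variable {G n M : Type*} [Group G] [Fintype n] [DecidableEq n] [Field M]
  {ρ R : G →* Matrix n n M} {B P : Matrix n n M} {τ : M →+* M}

/-- Hilbert's Theorem 90 for the involution `τ`. -/
lemma exists_map_mul_eq_self {z κ : M} (hz : z ≠ 0) (hτz : τ z = -z) (hκ : τ κ * κ = 1) :
    ∃ w ≠ 0, τ w * κ = w := by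
  by_cases h : κ = -1
  · exact ⟨z, hz, by rw [hτz, h, neg_mul_neg, mul_one]⟩
  · refine ⟨1 + κ, fun h₀ ↦ h (eq_neg_of_add_eq_zero_right h₀), ?_⟩
    rw [map_add, map_one, add_mul, one_mul, hκ, add_comm]

section Twist

variable (hρ : HasScalarCommutant ρ) (hB : ∀ g, B * ρ g = (ρ g).map τ * B)
  (hRτ : ∀ g, (R g).map τ = R g) (hP : IsUnit P) (hRP : ∀ g, R g * P = P * ρ g)
include hρ hB hRτ hP hRP

lemma exists_map_mul_eq_smul : ∃ κ : M, P.map τ * B = κ • P := by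
  obtain ⟨U, rfl⟩ := hP
  have hinv (g) : (U⁻¹ : (Matrix n n M)ˣ) * R g = ρ g * (U⁻¹ : (Matrix n n M)ˣ) :=
    SemiconjBy.units_inv_symm_left (hRP g).symm
  have hτ (g) : (U : Matrix n n M).map τ * (ρ g).map τ = R g * (U : Matrix n n M).map τ := by
    rw [← Matrix.map_mul, ← hRP, Matrix.map_mul, hRτ]
  obtain ⟨κ, hκ⟩ := hρ ((U⁻¹ : (Matrix n n M)ˣ) * ((U : Matrix n n M).map τ * B)) fun g ↦ by
    rw [← mul_assoc (ρ g), ← hinv, mul_assoc, mul_assoc, hB, ← mul_assoc (map _ _), hτ]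
    simp only [mul_assoc]
  exact ⟨κ, by rw [← U.mul_inv_cancel_left (_ * B), hκ, mul_smul_comm, mul_one]⟩

lemma exists_isUnit_intertwiner_map_mul_eq [Nonempty n] (hBB : B.map τ * B = 1)
    (hττ : ∀ x, τ (τ x) = x) {z : M} (hz : z ≠ 0) (hτz : τ z = -z) :
    ∃ Q, IsUnit Q ∧ (∀ g, R g * Q = Q * ρ g) ∧ Q.map τ * B = Q := by
  obtain ⟨κ, hκ⟩ := exists_map_mul_eq_smul hρ hB hRτ hP hRP
  have hsmul (w : M) : (w • P).map τ = τ w • P.map τ := by ext; simp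
  have hnorm : (τ κ * κ) • P = P := by
    rw [mul_smul, ← hκ, ← Matrix.smul_mul, ← hsmul, ← hκ, Matrix.map_mul, Matrix.mul_assoc, hBB,
      Matrix.mul_one]
    ext
    simp [hττ]
  obtain ⟨w, hw, hτw⟩ := exists_map_mul_eq_self hz hτz
    (smul_left_injective M hP.ne_zero (hnorm.trans (one_smul M P).symm))
  refine ⟨w • P, hP.smul (Units.mk0 w hw), fun g ↦ ?_, ?_⟩
  · rw [Matrix.mul_smul, hRP, Matrix.smul_mul]
  · rw [hsmul, Matrix.smul_mul, hκ, smul_smul, hτw]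

end Twist

variable [StarRing M] {H : Matrix n n M}

lemma exists_conjTranspose_mul_mul_eq_smul (hρ : HasScalarCommutant ρ)
    (hunit : ∀ g, (ρ g)ᴴ * ρ g = 1) (hRP : ∀ g, R g * P = P * ρ g)
    (hinv : ∀ g, (R g)ᴴ * H * R g = H) : ∃ c : M, Pᴴ * H * P = c • 1 := by
  refine hρ _ fun g ↦ ?_
  have hconj : Pᴴ * (R g)ᴴ = (ρ g)ᴴ * Pᴴ := by
    rw [← conjTranspose_mul, hRP, conjTranspose_mul]
  have hinv' : (ρ g)ᴴ * (Pᴴ * H * P * ρ g) = Pᴴ * H * P := by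
    simp only [Matrix.mul_assoc]
    rw [← hRP, ← Matrix.mul_assoc (ρ g)ᴴ, ← hconj]
    nth_rw 2 [← hinv g]
    simp only [Matrix.mul_assoc]
  rw [← hinv', ← mul_assoc (ρ g), mul_eq_one_comm.mp (hunit g), one_mul, hinv']

lemma map_eq_self_of_conjTranspose_mul_mul_eq_smul [Nonempty n]
    (hτstar : ∀ x, τ (star x) = star (τ x)) (hB : Bᴴ * B = 1) (hτP : P.map τ * B = P)
    (hτH : H.map τ = H) {c : M} (hc : Pᴴ * H * P = c • 1) : τ c = c := by
  have hτc : (P.map τ)ᴴ * H * P.map τ = τ c • 1 := by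
    have hmap : (P.map τ)ᴴ = Pᴴ.map τ := by
      ext
      simp [hτstar]
    rw [hmap]
    nth_rw 1 [← hτH]
    rw [← Matrix.map_mul, ← Matrix.map_mul, hc]
    ext i j
    simp [Matrix.one_apply, apply_ite τ]
  have hsmul : c • (1 : Matrix n n M) = τ c • 1 := by
    rw [← hc, ← hτP, conjTranspose_mul]
    calc
      _ = Bᴴ * ((P.map τ)ᴴ * H * P.map τ) * B := by simp only [mul_assoc]
      _ = τ c • 1 := by rw [hτc, mul_smul_comm, mul_one, smul_mul_assoc, hB]
  exact (smul_left_injective M one_ne_zero hsmul).symm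

lemma exists_det_eq_mul_star_of_map_mul_eq (hn : Even (Fintype.card n)) (hBB : Bᴴ * B = 1)
    (hτstar : ∀ x, τ (star x) = star (τ x)) (hP : IsUnit P) (hτP : P.map τ * B = P) {c : M}
    (hc : Pᴴ * H * P = c • 1) (hτc : τ c = c) (hcstar : star c = c) (hH : H.det ≠ 0)
    {w : M} (hw : w ≠ 0) (hτw : B.det * τ w = w) :
    ∃ y ≠ 0, τ y = y ∧ H.det = w * star w * (y * star y) := by
  obtain ⟨m, hm⟩ := hn
  have hπ : P.det ≠ 0 := ((isUnit_iff_isUnit_det P).mp hP).ne_zero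
  have hτπ : τ P.det * B.det = P.det := by
    rw [RingHom.map_det, RingHom.mapMatrix_apply, ← det_mul, hτP]
  have hdet : star P.det * H.det * P.det = c ^ m * c ^ m := by
    rw [← pow_add, ← hm, ← det_conjTranspose, ← det_mul, ← det_mul, hc, det_smul, det_one, mul_one]
  have hβ : star B.det * B.det = 1 := by rw [← det_conjTranspose, ← det_mul, hBB, det_one]
  have hcm : c ^ m ≠ 0 := fun h ↦ by
    rw [h, zero_mul] at hdet
    exact mul_ne_zero (mul_ne_zero (star_ne_zero.mpr hπ) hH) hπ hdet
  have hτwπ : τ (star w * P.det) = star w * P.det := by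
    calc
      τ (star w * P.det) = star B.det * B.det * (star (τ w) * τ P.det) := by
        rw [hβ, one_mul, map_mul, hτstar]
      _ = star (B.det * τ w) * (τ P.det * B.det) := by rw [star_mul']; ring
      _ = star w * P.det := by rw [hτw, hτπ]
  have hw' := star_ne_zero.mpr hw
  have hπ' := star_ne_zero.mpr hπ
  refine ⟨c ^ m / (star w * P.det), div_ne_zero hcm (mul_ne_zero hw' hπ),
    by rw [map_div₀, map_pow, hτc, hτwπ], ?_⟩
  rw [star_div₀, star_mul', star_star, star_pow, hcstar, div_mul_div_comm, ← hdet]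
  field_simp

theorem exists_det_eq_mul_star [Finite G] [Nonempty n] [CharZero M] (hn : Even (Fintype.card n))
    (hρ : HasScalarCommutant ρ) (hunit : ∀ g, (ρ g)ᴴ * ρ g = 1)
    (hB : ∀ g, B * ρ g = (ρ g).map τ * B) (hτB : B.map τ = Bᴴ) (hBB : Bᴴ * B = 1)
    (hττ : ∀ x, τ (τ x) = x) (hτstar : ∀ x, τ (star x) = star (τ x))
    {z w : M} (hz : z ≠ 0) (hτz : τ z = -z) (hw : w ≠ 0) (hτw : B.det * τ w = w)
    (hRτ : ∀ g, (R g).map τ = R g) (htr : ∀ g, (R g).trace = (ρ g).trace)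
    (hτH : H.map τ = H) (hH : H.det ≠ 0) (hHH : Hᴴ = H) (hinv : ∀ g, (R g)ᴴ * H * R g = H) :
    ∃ y ≠ 0, τ y = y ∧ H.det = w * star w * (y * star y) := by
  obtain ⟨P₀, hP₀, hRP₀⟩ := hρ.exists_isUnit_intertwiner R htr
  obtain ⟨P, hP, hRP, hτP⟩ := exists_isUnit_intertwiner_map_mul_eq hρ hB hRτ hP₀ hRP₀
    (hτB ▸ hBB) hττ hz hτz
  obtain ⟨c, hc⟩ := exists_conjTranspose_mul_mul_eq_smul hρ hunit hRP hinv
  have hτc := map_eq_self_of_conjTranspose_mul_mul_eq_smul hτstar hBB hτP hτH hc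
  have hcstar : star c = c := by
    have hstar := congrArg conjTranspose hc
    rw [conjTranspose_mul, conjTranspose_mul, conjTranspose_conjTranspose, hHH, ← mul_assoc, hc,
      conjTranspose_smul, conjTranspose_one] at hstar
    exact (smul_left_injective M one_ne_zero hstar).symm
  exact exists_det_eq_mul_star_of_map_mul_eq hn hBB hτstar hP hτP hc hτc hcstar hH hw hτw

end Descent

/-! ### Cyclotomic fields -/

/-- The star operation given by an involution of a commutative ring. -/
abbrev starRingOfInvolutive {R : Type} [CommRing R] {σ : R →+* R} (hσ : Function.Involutive σ) :
    StarRing R where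
  star := σ
  star_involutive := hσ
  star_mul x y := by rw [map_mul, mul_comm]
  star_add := map_add σ

section Cyclotomic

variable {n : ℕ} [NeZero n] {M : Type} [Field M] [Algebra ℚ M] [IsCyclotomicExtension {n} ℚ M]
  {ζ : M} (hζ : IsPrimitiveRoot ζ n)
include hζ

lemma ringHom_ext_of_isPrimitiveRoot {R : Type} [Field R] [CharZero R] {σ σ' : M →+* R}
    (h : σ ζ = σ' ζ) : σ = σ' := by
  have hQ : σ.toRatAlgHom = σ'.toRatAlgHom := (hζ.powerBasis ℚ).algHom_ext <| by
    rw [hζ.powerBasis_gen ℚ]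
    exact h
  ext x
  exact DFunLike.congr_fun hQ x

lemma exists_ringHom_apply_eq {R : Type} [Field R] [CharZero R] {ξ : R}
    (hξ : IsPrimitiveRoot ξ n) : ∃ σ : M →+* R, σ ζ = ξ := by
  let e := hζ.embeddingsEquivPrimitiveRoots R (Polynomial.cyclotomic.irreducible_rat (NeZero.pos n))
  let ξ' : primitiveRoots n R := ⟨ξ, (mem_primitiveRoots (NeZero.pos n)).mpr hξ⟩
  exact ⟨(e.symm ξ' : M →+* R), congrArg Subtype.val (e.apply_symm_apply ξ')⟩

omit [Algebra ℚ M] [IsCyclotomicExtension {n} ℚ M] in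
lemma exists_forall_apply_eq_pow (σ : M →+* M) : ∃ j : ℕ, ∀ x, x ^ n = 1 → σ x = x ^ j := by
  obtain ⟨j, -, hj⟩ := hζ.eq_pow_of_pow_eq_one (ξ := σ ζ)
    (by rw [← map_pow, hζ.pow_eq_one, map_one])
  refine ⟨j, fun x hx ↦ ?_⟩
  obtain ⟨i, -, rfl⟩ := hζ.eq_pow_of_pow_eq_one hx
  rw [map_pow, ← hj, ← pow_mul, ← pow_mul, mul_comm]

lemma exists_starRing (ι : M →+* ℂ) : ∃ _ : StarRing M, ∀ x, ι (star x) = star (ι x) := by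
  have : CharZero M := algebraRat.charZero M
  obtain ⟨σ, hσ⟩ := exists_ringHom_apply_eq hζ hζ.inv
  have hι : ι.comp σ = (starRingEnd ℂ).comp ι := ringHom_ext_of_isPrimitiveRoot hζ <| by
    have hnorm : ‖ι ζ‖ = 1 := Complex.norm_eq_one_of_pow_eq_one
      (by rw [← map_pow, hζ.pow_eq_one, map_one]) (NeZero.ne n)
    rw [RingHom.comp_apply, RingHom.comp_apply, hσ, map_inv₀, Complex.inv_eq_conj hnorm]
  have hισ (x : M) : ι (σ x) = star (ι x) := DFunLike.congr_fun hι x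
  exact ⟨starRingOfInvolutive fun x ↦ ι.injective <| by rw [hισ, hισ, star_star], hισ⟩

end Cyclotomic

lemma star_eq_inv_of_pow_eq_one {M : Type} [Field M] [StarRing M] {ι : M →+* ℂ}
    (hι : ∀ x, ι (star x) = star (ι x)) {x : M} {n : ℕ} (hn : n ≠ 0) (hx : x ^ n = 1) :
    star x = x⁻¹ := by
  have hnorm : ‖ι x‖ = 1 :=
    Complex.norm_eq_one_of_pow_eq_one (by rw [← map_pow, hx, map_one]) hn
  apply ι.injective
  rw [hι, map_inv₀, Complex.inv_eq_conj hnorm, Complex.star_def]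

lemma exists_addChar_apply_one_ne_one {F N : Type} [Field F] [Field N] {p : ℕ} [Fact p.Prime]
    [CharP F p] {ζ : N} (hζ : IsPrimitiveRoot ζ p) : ∃ ψ : AddChar F N, ψ 1 ≠ 1 := by
  have : NeZero p := ⟨(Fact.out : p.Prime).ne_zero⟩
  let _ : Algebra (ZMod p) F := ZMod.algebra F p
  obtain ⟨f, hf⟩ := Module.Projective.exists_dual_eq_one (ZMod p) (one_ne_zero (α := F))
  refine ⟨(AddChar.zmodChar p hζ.pow_eq_one).compAddMonoidHom f.toAddMonoidHom, ?_⟩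
  rw [AddChar.compAddMonoidHom_apply, LinearMap.toAddMonoidHom_coe, hf, AddChar.zmodChar_apply,
    ZMod.val_one, pow_one]
  exact hζ.ne_one (Fact.out : p.Prime).one_lt

lemma addChar_pow_char {F N : Type} [Field F] [Field N] (p : ℕ) [CharP F p] (ψ : AddChar F N)
    (x : F) : ψ x ^ p = 1 := by
  rw [← AddChar.map_nsmul_eq_pow, nsmul_eq_mul, CharP.cast_eq_zero, zero_mul,
    AddChar.map_zero_eq_one]

lemma exists_map_addChar_eq {F N : Type} [Field F] [Field N] {p : ℕ} [NeZero p] [CharP F p] {ζ : N}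
    (hζ : IsPrimitiveRoot ζ p) {ψ : AddChar F N} (hψ : ψ 1 ≠ 1) (σ : N →+* N) :
    ∃ j : ℕ, (j : F) ≠ 0 ∧ ∀ x, σ (ψ x) = ψ (j * x) := by
  obtain ⟨j, hj⟩ := exists_forall_apply_eq_pow hζ σ
  have hσψ (x : F) : σ (ψ x) = ψ (j * x) := by
    rw [hj _ (addChar_pow_char p ψ x), ← AddChar.map_nsmul_eq_pow, nsmul_eq_mul]
  refine ⟨j, fun h ↦ hψ (σ.injective ?_), hσψ⟩
  rw [hσψ, h, zero_mul, AddChar.map_zero_eq_one, map_one]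

lemma mem_range_of_forall_map_eq {M N : Type} [Field M] [Field N] [CharZero M] [Algebra ℚ N]
    [IsGalois ℚ N] (i : M →+* N) {y : N}
    (hy : ∀ σ : N →+* N, (∀ x, σ (i x) = i x) → σ y = y) : y ∈ i.range := by
  let _ : Algebra M N := i.toAlgebra
  have : IsGalois M N := .tower_top_of_isGalois ℚ M N
  exact (InfiniteGalois.mem_range_algebraMap_iff_fixed y).mpr fun σ ↦ hy σ σ.commutes

lemma exists_involutive_eq_pow {d p m : ℕ} [NeZero (p * d)] {N : Type} [Field N] [Algebra ℚ N]
    [IsCyclotomicExtension {p * d} ℚ N] {ζ : N} (hζ : IsPrimitiveRoot ζ (p * d))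
    (hpd : p.Coprime d) (hm : m * m ≡ 1 [MOD d]) :
    ∃ τ : N →+* N, (∀ x, x ^ d = 1 → τ x = x ^ m) ∧ (∀ x, x ^ p = 1 → τ x = x) ∧
      ∀ x, τ (τ x) = x := by
  have : CharZero N := algebraRat.charZero N
  obtain ⟨j, hjp, hjd⟩ := Nat.chineseRemainder hpd 1 m
  have hjj : j * j ≡ 1 [MOD p * d] := (Nat.modEq_and_modEq_iff_modEq_mul hpd).mp
    ⟨hjp.mul hjp, (hjd.mul hjd).trans hm⟩
  have hj : j.Coprime (p * d) :=
    (show (j * j).Coprime (p * d) from hjj.gcd_eq.trans (Nat.gcd_one_left _)).coprime_mul_right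
  obtain ⟨τ, hτ⟩ := exists_ringHom_apply_eq hζ (hζ.pow_of_coprime j hj)
  have hτ_pow {x : N} (hx : x ^ (p * d) = 1) : τ x = x ^ j := by
    obtain ⟨i, -, rfl⟩ := hζ.eq_pow_of_pow_eq_one hx
    rw [map_pow, hτ, pow_right_comm]
  refine ⟨τ, fun x hx ↦ ?_, fun x hx ↦ ?_, fun x ↦ ?_⟩
  · rw [hτ_pow (by rw [pow_mul', hx, one_pow])]
    exact pow_eq_pow_of_modEq hjd hx
  · rw [hτ_pow (by rw [pow_mul, hx, one_pow])]
    exact (pow_eq_pow_of_modEq hjp hx).trans (pow_one x)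
  · refine DFunLike.congr_fun (ringHom_ext_of_isPrimitiveRoot hζ (σ := τ.comp τ)
      (σ' := RingHom.id N) ?_) x
    rw [RingHom.comp_apply, hτ, map_pow, hτ, ← pow_mul, RingHom.id_apply]
    exact (pow_eq_pow_of_modEq hjj hζ.pow_eq_one).trans (pow_one ζ)

lemma map_star_of_isPrimitiveRoot {d : ℕ} [NeZero d] {M N : Type} [Field M] [Algebra ℚ M]
    [IsCyclotomicExtension {d} ℚ M] [StarRing M] [Field N] [StarRing N] [CharZero N] {ζ : M}
    (hζ : IsPrimitiveRoot ζ d) {ι : M →+* ℂ} (hι : ∀ x, ι (star x) = star (ι x)) {ιN : N →+* ℂ}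
    (hιN : ∀ x, ιN (star x) = star (ιN x)) (i : M →+* N) (x : M) : i (star x) = star (i x) := by
  refine DFunLike.congr_fun (ringHom_ext_of_isPrimitiveRoot hζ (σ := i.comp (starRingEnd M))
    (σ' := (starRingEnd N).comp i) ?_) x
  have hζi : i ζ ^ d = 1 := by rw [← map_pow, hζ.pow_eq_one, map_one]
  simp only [RingHom.comp_apply, starRingEnd_apply, map_inv₀,
    star_eq_inv_of_pow_eq_one hι (NeZero.ne d) hζ.pow_eq_one,
    star_eq_inv_of_pow_eq_one hιN (NeZero.ne d) hζi]

section UnitaryIntertwiner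

variable {q : ℕ} {F M : Type} [Field F] [StarRing F] [IsHermitianField q F] [Field M]

lemma mulChar_pow_sq_sub_one (θ : MulChar F M) (x : Fˣ) : θ x ^ (q ^ 2 - 1) = 1 := by
  rw [← map_pow, ← Units.val_pow_eq_pow_val, IsHermitianField.pow_sq_sub_one, Units.val_one,
    map_one]

omit [StarRing F] [IsHermitianField q F] in
lemma star_mulChar [Finite F] [StarRing M] {ι : M →+* ℂ} (hι : ∀ x, ι (star x) = star (ι x))
    (θ : MulChar F M) (x : F) : star (θ x) = (θ x)⁻¹ := by
  obtain rfl | hx := eq_or_ne x 0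
  · rw [MulChar.map_zero, star_zero, _root_.inv_zero]
  · refine star_eq_inv_of_pow_eq_one hι (Nat.card_pos (α := Fˣ)).ne' ?_
    rw [← Units.val_mk0 hx, ← map_pow, ← Units.val_pow_eq_pow_val, pow_card_eq_one', Units.val_one,
      map_one]

lemma coprime_sq_of_dvd_sq_sub_one {d q : ℕ} (hd : d ∣ q ^ 2 - 1) (hq : 1 ≤ q) :
    (q ^ 2).Coprime d :=
  ((Nat.coprime_self_sub_right (Nat.one_le_pow 2 q hq)).mpr
    (Nat.coprime_one_right _)).coprime_dvd_right hd

variable (F) in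
lemma coprime_of_dvd_sq_sub_one {p d : ℕ} [CharP F p] (hd : d ∣ q ^ 2 - 1) : p.Coprime d := by
  have := Fintype.ofFinite F
  have hp : p ∣ q ^ 2 := by
    rw [← IsHermitianField.card_eq F, Nat.card_eq_fintype_card, ← CharP.cast_eq_zero_iff F,
      FiniteField.cast_card_eq_zero]
  exact (coprime_sq_of_dvd_sq_sub_one hd (IsHermitianField.one_lt F).le).coprime_dvd_left hp

lemma map_mulChar_eq {θ : MulChar F M} {x₀ : Fˣ} (hx₀ : ∀ x, x ∈ Submonoid.powers x₀)
    {τ : M →+* M} (h : τ (θ x₀) = (θ x₀ ^ q)⁻¹) (x : F) : τ (θ x) = (θ (star x))⁻¹ := by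
  obtain rfl | hx := eq_or_ne x 0
  · rw [star_zero, MulChar.map_zero, map_zero, _root_.inv_zero]
  · obtain ⟨n, hn⟩ := hx₀ (Units.mk0 x hx)
    obtain rfl : (x₀ : F) ^ n = x := by simpa using congrArg Units.val hn
    rw [map_pow, map_pow, h, inv_pow, IsHermitianField.star_eq_pow, map_pow, map_pow,
      pow_right_comm]

lemma pred_mul_sq_modEq_one {d q : ℕ} [NeZero d] (hd : d ∣ q ^ 2 - 1) (hq : 1 ≤ q) :
    (d - 1) * q * ((d - 1) * q) ≡ 1 [MOD d] := by
  have hq2 : ((q ^ 2 : ℕ) : ZMod d) = 1 := by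
    rw [← Nat.sub_add_cancel (Nat.one_le_pow 2 q hq), Nat.cast_add,
      (ZMod.natCast_eq_zero_iff _ d).mpr hd, zero_add, Nat.cast_one]
  rw [← ZMod.natCast_eq_natCast_iff]
  push_cast [Nat.cast_pred (NeZero.pos d)] at hq2 ⊢
  rw [CharP.cast_eq_zero]
  linear_combination hq2

variable {θ : MulChar F M} {x₀ : Fˣ} (hx₀ : ∀ x, x ∈ Submonoid.powers x₀) {d : ℕ} [NeZero d]
  [Algebra ℚ M] [IsCyclotomicExtension {d} ℚ M] (hs : IsPrimitiveRoot (θ x₀) d)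
include hx₀ hs

lemma exists_isTwist {τ : M →+* M} (hτ : τ (θ x₀) = (θ x₀ ^ q)⁻¹) {p : ℕ} [NeZero p] [CharP F p]
    {N : Type} [Field N] [StarRing N] [Algebra ℚ N]
    [IsCyclotomicExtension {p * d} ℚ N] {ζ : N} (hζ : IsPrimitiveRoot ζ (p * d)) {ιN : N →+* ℂ}
    (hιN : ∀ x, ιN (star x) = star (ιN x)) (i : M →+* N) (ψ : AddChar F N) :
    ∃ τ' : N →+* N, IsTwist (θ.ringHomComp i) ψ τ' ∧ (∀ x, i (τ x) = τ' (i x)) ∧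
      ∀ x, τ' (τ' x) = x := by
  have : CharZero N := algebraRat.charZero N
  have hdq : d ∣ q ^ 2 - 1 := hs.dvd_of_pow_eq_one _ (mulChar_pow_sq_sub_one θ x₀)
  obtain ⟨τ', hτ'd, hτ'p, hττ⟩ := exists_involutive_eq_pow hζ (coprime_of_dvd_sq_sub_one F hdq)
    (pred_mul_sq_modEq_one hdq (IsHermitianField.one_lt F).le)
  have hi : i (θ x₀) ^ d = 1 := by rw [← map_pow, hs.pow_eq_one, map_one]
  have hτi : ∀ x, i (τ x) = τ' (i x) := by
    refine DFunLike.congr_fun (ringHom_ext_of_isPrimitiveRoot hs (σ := i.comp τ)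
      (σ' := τ'.comp i) ?_)
    rw [RingHom.comp_apply, RingHom.comp_apply, hτ, hτ'd _ hi, map_inv₀, map_pow]
    refine inv_eq_of_mul_eq_one_left ?_
    rw [← pow_add, ← Nat.succ_mul, Nat.succ_eq_add_one, Nat.sub_add_cancel (NeZero.pos d), pow_mul,
      hi, one_pow]
  refine ⟨τ', ⟨star_mulChar hιN _, fun x ↦ ?_, fun x ↦ ?_, fun x ↦ ?_⟩, hτi, hττ⟩
  · rw [star_eq_inv_of_pow_eq_one hιN (NeZero.ne p) (addChar_pow_char p ψ x),
      AddChar.map_neg_eq_inv]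
  · rw [MulChar.ringHomComp_apply, ← hτi, map_mulChar_eq hx₀ hτ, map_inv₀]
    rfl
  · exact hτ'p _ (addChar_pow_char p ψ x)

/-- The normalising scalars are fixed by the Galois group of `ℚ(ζ_{pd})` over `ℚ(ζ_d)`. -/
theorem exists_isUnitaryIntertwiner_of_isPrimitiveRoot {p : ℕ} [Fact p.Prime] [CharP F p]
    [Fintype F] [DecidableEq F] [Fintype (skewAdjoint F)] [StarRing M]
    {ι : M →+* ℂ} (hι : ∀ x, ι (star x) = star (ι x))
    {τ : M →+* M} (hτ : τ (θ x₀) = (θ x₀ ^ q)⁻¹) (ha : θ (x₀ * star (x₀ : F)) ≠ 1) {u : ℕ}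
    (hu : θ (-1) = (-1) ^ u) : ∃ B v, IsUnitaryIntertwiner θ τ u B v := by
  have := Fintype.ofFinite (selfAdjoint F)
  have : CharZero M := algebraRat.charZero M
  have : NeZero p := ⟨(Fact.out : p.Prime).ne_zero⟩
  have : NeZero ((p * d : ℕ) : ℚ) := NeZero.charZero
  let N := CyclotomicField (p * d) ℚ
  have : IsCyclotomicExtension {p * d} ℚ N := CyclotomicField.isCyclotomicExtension _ _
  have hζ : IsPrimitiveRoot (IsCyclotomicExtension.zeta (p * d) ℚ N) (p * d) :=
    IsCyclotomicExtension.zeta_spec _ _ _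
  have hζp := hζ.pow (NeZero.pos _) (mul_comm p d)
  have : IsGalois ℚ N := IsCyclotomicExtension.isGalois {p * d} ℚ N
  obtain ⟨ιN, -⟩ := exists_ringHom_apply_eq hζ (Complex.isPrimitiveRoot_exp _ (NeZero.ne (p * d)))
  obtain ⟨_, hιN⟩ := exists_starRing hζ ιN
  obtain ⟨i, -⟩ := exists_ringHom_apply_eq hs (hζ.pow (NeZero.pos _) rfl)
  obtain ⟨ψ, hψ⟩ := exists_addChar_apply_one_ne_one (F := F) hζp
  obtain ⟨τ', htwist, hτi, hττ⟩ := exists_isTwist hx₀ hs hτ hζ hιN i ψ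
  obtain ⟨c, hc⟩ := IsHermitianField.exists_skewAdjoint_ne_zero F
  have hσ (σ : N →+* N) (hσi : ∀ x, σ (i x) = i x) : (∀ x, σ (θ.ringHomComp i x) =
      θ.ringHomComp i x) ∧ ∃ j : selfAdjoint F, j ≠ 0 ∧ ∀ x, σ (ψ x) = ψ (j * x) := by
    obtain ⟨j, hj, hσψ⟩ := exists_map_addChar_eq hζp hψ σ
    exact ⟨fun x ↦ hσi _, (j : selfAdjoint F), fun h ↦ hj (congrArg Subtype.val h), hσψ⟩
  refine exists_isUnitaryIntertwiner (map_star_of_isPrimitiveRoot hs hι hιN i) hτi htwist hψ hττ ha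
    ιN hιN hc (mem_range_of_forall_map_eq i fun σ hσi ↦ ?_)
    (mem_range_of_forall_map_eq i fun σ hσi ↦ ?_)
  · obtain ⟨hσθ, j, hj, hσψ⟩ := hσ σ hσi
    exact map_unitarizer hσθ hσψ hj
  · obtain ⟨hσθ, j, hj, hσψ⟩ := hσ σ hσi
    exact map_sqrtDet hσθ hσψ hj (by simp [hu]) c

end UnitaryIntertwiner

/-! ### Characters -/

section Character

variable {G n M : Type} [Group G] [Fintype n] [DecidableEq n] [Field M]

lemma HasScalarCommutant.reindex {m : Type} [Fintype m] [DecidableEq m] {ρ : G →* Matrix n n M}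
    (hρ : HasScalarCommutant ρ) (e : n ≃ m) :
    HasScalarCommutant ((reindexAlgEquiv M M e : Matrix n n M →* Matrix m m M).comp ρ) := by
  intro C hC
  obtain ⟨c, hc⟩ := hρ ((reindexAlgEquiv M M e).symm C) fun g ↦
    (reindexAlgEquiv M M e).injective <| by
      rw [map_mul, map_mul, AlgEquiv.apply_symm_apply]
      exact hC g
  exact ⟨c, (reindexAlgEquiv M M e).symm.injective <| by rw [hc, map_smul, map_one]⟩

lemma isIrrChar_of_hasScalarCommutant [Finite G] [Nonempty n] {ρ : G →* Matrix n n ℂ}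
    (hρ : HasScalarCommutant ρ) : IsIrrChar fun g ↦ (ρ g).trace := by
  let e := Fintype.equivFin n
  refine ⟨_, MonoidHom.toHomUnits _, ⟨Fintype.card_pos, (hρ.reindex e).eq_bot_or_eq_top⟩, ?_⟩
  ext g
  exact (e.symm.sum_comp fun i ↦ ρ g i i).symm

omit [Fintype n] [DecidableEq n] in
lemma exists_map_eq_of_forall_mem {N : Type} [Field N] {i : M →+* N} {K : Subfield M}
    {A : Matrix n n N} (hA : ∀ x y, A x y ∈ K.map i) :
    ∃ B : Matrix n n M, (∀ x y, B x y ∈ K) ∧ B.map i = A := by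
  choose B hBK hB using hA
  exact ⟨of B, hBK, Matrix.ext hB⟩

lemma exists_monoidHom_map_eq_of_forall_mem {N : Type} [Field N] {i : M →+* N} {K : Subfield M}
    {ρ : G →* Matrix n n N} (hρ : ∀ g x y, ρ g x y ∈ K.map i) :
    ∃ R : G →* Matrix n n M, (∀ g x y, R g x y ∈ K) ∧ ∀ g, (R g).map i = ρ g := by
  choose R hRK hR using fun g ↦ exists_map_eq_of_forall_mem (hρ g)
  refine ⟨⟨⟨R, ?_⟩, fun g h ↦ ?_⟩, hRK, hR⟩
  all_goals apply Matrix.map_injective i.injective; beta_reduce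
  · simp [hR]
  · rw [Matrix.map_mul, hR, hR, hR, map_mul]

lemma star_eq_self_of_mem_realsIn {x : ℂ} (hx : x ∈ realsIn) : star x = x := by
  have hle : realsIn ≤ (starRingEnd ℂ).eqLocusField (RingHom.id ℂ) := by
    rw [realsIn, Subfield.closure_le]
    rintro _ ⟨r, rfl⟩
    exact Complex.conj_ofReal r
  exact hle hx

variable {χ : G → ℂ} {ι : M →+* ℂ} [StarRing M] (hι : ∀ x, ι (star x) = star (ι x))
  {K : Subfield M} (hK : charField χ = K.map ι)
include hι hK

lemma notReal_of_star_ne_self {x : M} (hx : x ∈ K) (hx' : star x ≠ x) : NotReal χ := by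
  refine fun hle ↦ hx' (ι.injective ?_)
  rw [hι, star_eq_self_of_mem_realsIn (hle (hK ▸ ⟨x, hx, rfl⟩))]

lemma hasUnitaryDisc_of_forall (hχ : χ 1 = Fintype.card n) {d : M}
    (h : ∀ (R : G →* Matrix n n M) (H : Matrix n n M), (∀ g, χ g = ι (R g).trace) →
      (∀ g i j, R g i j ∈ K) → (∀ i j, H i j ∈ K) → H.det ≠ 0 → Hᴴ = H →
      (∀ g, (R g)ᴴ * H * R g = H) → ∃ y ∈ K, y ≠ 0 ∧ H.det = d * (y * star y)) :
    HasUnitaryDisc χ ((-1) ^ (Fintype.card n * (Fintype.card n - 1) / 2) * ι d) := by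
  intro k ρ hρ hρK H hHK hH hHH hinv
  obtain rfl : Fintype.card n = k := by
    rw [hρ, charOf, map_one, Units.val_one, trace_one, Fintype.card_fin] at hχ
    exact_mod_cast hχ.symm
  let e := Fintype.equivFin n
  let ρ' : G →* Matrix n n ℂ := (reindexAlgEquiv ℂ ℂ e.symm : Matrix _ _ ℂ →* Matrix n n ℂ).comp <|
    (Units.coeHom _).comp ρ
  have hρ' (g) : ρ' g = (ρ g : Matrix _ _ ℂ).submatrix e e := rfl
  simp only [hK] at hρK hHK
  obtain ⟨R, hRK, hR⟩ := exists_monoidHom_map_eq_of_forall_mem (ρ := ρ') fun g _ _ ↦ hρK g _ _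
  obtain ⟨H', hH'K, hH'⟩ := exists_map_eq_of_forall_mem (A := H.submatrix e e) fun _ _ ↦ hHK _ _
  have hstar (A : Matrix n n M) : Aᴴ.map ι = (A.map ι)ᴴ := by ext; exact hι _
  have hdet : ι H'.det = H.det := by
    rw [RingHom.map_det, RingHom.mapMatrix_apply, hH', det_submatrix_equiv_self]
  have htrace (g) : χ g = ι (R g).trace := by
    rw [hρ, AddMonoidHom.map_trace, hR, hρ']
    exact (e.sum_comp fun i ↦ (ρ g : Matrix _ _ ℂ) i i).symm
  have hinj {A B : Matrix n n M} (hAB : A.map ι = B.map ι) : A = B :=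
    Matrix.map_injective ι.injective hAB
  have hH'H' : H'ᴴ = H' := hinj <| by rw [hstar, hH', conjTranspose_submatrix, hHH]
  have hinv' (g) : (R g)ᴴ * H' * R g = H' := hinj <| by
    rw [Matrix.map_mul, Matrix.map_mul, hstar, hH', hR, hρ', conjTranspose_submatrix,
      submatrix_mul_equiv, submatrix_mul_equiv, hinv]
  obtain ⟨y, hyK, hy, hH'd⟩ := h R H' htrace hRK hH'K
    (fun h₀ ↦ hH.ne_zero (by rw [← hdet, h₀, map_zero])) hH'H' hinv'
  refine ⟨ι y, hK ▸ ⟨y, hyK, rfl⟩, (map_ne_zero ι).mpr hy, ?_⟩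
  rw [← hdet, hH'd, map_mul, map_mul, hι, mul_assoc]
  rfl

end Character

lemma map_eq_or_map_eq {M : Type} [Field M] {σ : M →+* M} {s t : M} (hadd : σ (s + t) = s + t)
    (hmul : σ (s * t) = s * t) : σ s = s ∨ σ s = t := by
  rw [map_add] at hadd
  rw [map_mul] at hmul
  rw [← sub_eq_zero, ← sub_eq_zero (b := t), ← mul_eq_zero]
  linear_combination σ s * hadd - hmul

lemma mem_of_map_eq {d : ℕ} [NeZero d] {M : Type} [Field M] [Algebra ℚ M]
    [IsCyclotomicExtension {d} ℚ M] {ζ : M} (hζ : IsPrimitiveRoot ζ d) {τ : M →+* M}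
    {K : Subfield M} (hadd : ζ + τ ζ ∈ K) (hmul : ζ * τ ζ ∈ K) {y : M} (hy : τ y = y) : y ∈ K := by
  have : CharZero M := algebraRat.charZero M
  have : IsGalois ℚ M := IsCyclotomicExtension.isGalois {d} ℚ M
  suffices hrange : y ∈ K.subtype.range by simpa using hrange
  refine mem_range_of_forall_map_eq K.subtype fun σ hσ ↦ ?_
  rcases map_eq_or_map_eq (hσ ⟨_, hadd⟩) (hσ ⟨_, hmul⟩) with h | h
  · rw [ringHom_ext_of_isPrimitiveRoot hζ (σ' := RingHom.id M) h, RingHom.id_apply]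
  · rw [ringHom_ext_of_isPrimitiveRoot hζ h, hy]

section PrincipalSeriesCharacter

open specialUnitary

variable {q : ℕ} {F M : Type} [Field F] [StarRing F] [IsHermitianField q F] [Fintype F]
  [DecidableEq F] [Fintype (skewAdjoint F)] [Field M] {θ : MulChar F M}

lemma trace_principalSeries_mem_eqLocusField [StarRing M] {τ : M →+* M} {u : ℕ}
    {B : Matrix (IsotropicLine F) (IsotropicLine F) M} {v : M}
    (h : IsUnitaryIntertwiner θ τ u B v) (g : specialUnitary F) :
    (principalSeries θ g).trace ∈ τ.eqLocusField (RingHom.id M) := by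
  change τ _ = _
  rw [AddMonoidHom.map_trace, ← mul_one ((principalSeries θ g).map τ),
    ← mul_eq_one_comm.mp h.conjTranspose_mul_self, ← mul_assoc, ← h.mul_principalSeries,
    trace_mul_comm, ← mul_assoc, h.conjTranspose_mul_self, one_mul]
  rfl

lemma trace_principalSeries_ringHomComp (ι : M →+* ℂ) (g : specialUnitary F) :
    (principalSeries (θ.ringHomComp ι) g).trace = ι (principalSeries θ g).trace := by
  simp only [trace_principalSeries, map_sum, apply_ite ι, map_zero, MulChar.ringHomComp_apply]

variable {ι : M →+* ℂ} {χ : specialUnitary F → ℂ}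
  (hχ : ∀ g, χ g = ι (principalSeries θ g).trace) {x₀ : Fˣ}
include hχ

lemma add_inv_pow_mem_charField (hx₀ : ∀ x, x ∈ Submonoid.powers x₀) :
    ι (θ x₀ + (θ x₀ ^ q)⁻¹) ∈ charField χ := by
  refine Subfield.subset_closure ⟨torus x₀, ?_⟩
  rw [hχ, trace_principalSeries_torus θ (IsHermitianField.mul_star_ne_one hx₀)
    (IsHermitianField.star_sq_ne_self hx₀), IsHermitianField.star_eq_pow, map_pow θ]

lemma mul_inv_pow_mem_charField : ι (θ x₀ * (θ x₀ ^ q)⁻¹) ∈ charField χ := by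
  have hq := IsHermitianField.one_lt F
  have hx : ((x₀ ^ (q - 1) : Fˣ) : F) * star ((x₀ ^ (q - 1) : Fˣ) : F) = 1 := by
    rw [IsHermitianField.star_eq_pow, ← pow_succ', ← Units.val_pow_eq_pow_val, ← pow_mul,
      mul_comm, show (q + 1) * (q - 1) = q ^ 2 - 1 from (Nat.sq_sub_sq q 1).symm,
      IsHermitianField.pow_sq_sub_one, Units.val_one]
  obtain ⟨k, hk, htrace⟩ := exists_trace_principalSeries_torus θ hx
  have hmem : (k : ℂ) * ι (θ x₀ ^ (q - 1)) ∈ charField χ := Subfield.subset_closure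
    ⟨torus (x₀ ^ (q - 1)), by
      rw [hχ, htrace, map_mul, map_natCast, Units.val_pow_eq_pow_val, map_pow θ]⟩
  have hinv : θ x₀ * (θ x₀ ^ q)⁻¹ = (θ x₀ ^ (q - 1))⁻¹ := by
    have hθ : θ x₀ ≠ 0 := (x₀.isUnit.map θ).ne_zero
    obtain ⟨m, rfl⟩ := Nat.exists_eq_add_of_le' hq.le
    rw [pow_succ', _root_.mul_inv, mul_inv_cancel_left₀ hθ, Nat.add_sub_cancel]
  rw [hinv, map_inv₀]
  have hkℂ : (k : ℂ) ≠ 0 := Nat.cast_ne_zero.mpr hk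
  rw [← mul_div_cancel_left₀ (ι _) hkℂ]
  exact inv_mem (div_mem hmem (natCast_mem _ k))

omit [Fintype F] [DecidableEq F] [Fintype (skewAdjoint F)] hχ in
lemma map_map_eq_self {d : ℕ} [NeZero d] [Algebra ℚ M] [IsCyclotomicExtension {d} ℚ M]
    (hs : IsPrimitiveRoot (θ x₀) d) {τ : M →+* M} (hτ : τ (θ x₀) = (θ x₀ ^ q)⁻¹) (x : M) :
    τ (τ x) = x := by
  have : CharZero M := algebraRat.charZero M
  refine DFunLike.congr_fun (ringHom_ext_of_isPrimitiveRoot hs (σ := τ.comp τ)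
    (σ' := RingHom.id M) ?_) x
  rw [RingHom.comp_apply, hτ, map_inv₀, map_pow, hτ, inv_pow, _root_.inv_inv, ← pow_mul, ← sq,
    ← Nat.sub_add_cancel (Nat.one_le_pow 2 q (IsHermitianField.one_lt F).le), pow_succ,
    mulChar_pow_sq_sub_one, one_mul, RingHom.id_apply]

variable (hx₀ : ∀ x, x ∈ Submonoid.powers x₀) {d : ℕ} [NeZero d] [Algebra ℚ M]
  [IsCyclotomicExtension {d} ℚ M] [StarRing M] (hs : IsPrimitiveRoot (θ x₀) d) {τ : M →+* M}
  (hτ : τ (θ x₀) = (θ x₀ ^ q)⁻¹) {u : ℕ} {B : Matrix (IsotropicLine F) (IsotropicLine F) M} {v : M}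
  (hB : IsUnitaryIntertwiner θ τ u B v)
include hx₀ hs hτ hB

lemma charField_eq_map_eqLocusField :
    charField χ = (τ.eqLocusField (RingHom.id M)).map ι := by
  refine le_antisymm ?_ fun x hx ↦ ?_
  · rw [charField, Subfield.closure_le]
    rintro _ ⟨g, rfl⟩
    exact ⟨_, trace_principalSeries_mem_eqLocusField hB g, (hχ g).symm⟩
  · obtain ⟨y, hy, rfl⟩ := hx
    exact mem_of_map_eq (K := (charField χ).comap ι) hs (hτ ▸ add_inv_pow_mem_charField hχ hx₀)
      (hτ ▸ mul_inv_pow_mem_charField hχ) hy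

lemma notReal_of_trace_principalSeries (hι : ∀ x, ι (star x) = star (ι x))
    (hs₁ : θ x₀ ^ (q - 1) ≠ 1) (hs₂ : θ x₀ ^ (q + 1) ≠ 1) : NotReal χ := by
  have hK := charField_eq_map_eqLocusField hχ hx₀ hs hτ hB
  have hττ := map_map_eq_self hs hτ
  have hadd : τ (θ x₀ + τ (θ x₀)) = θ x₀ + τ (θ x₀) := by rw [map_add, hττ, add_comm]
  have hmul : τ (θ x₀ * τ (θ x₀)) = θ x₀ * τ (θ x₀) := by rw [map_mul, hττ, mul_comm]
  have hθ : θ x₀ ≠ 0 := (x₀.isUnit.map θ).ne_zero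
  by_contra hreal
  have hfix {x : M} (hx : τ x = x) : starRingEnd M x = x := by
    by_contra hne
    exact hreal (notReal_of_star_ne_self hι hK hx hne)
  rcases map_eq_or_map_eq (hfix hadd) (hfix hmul) with h | h <;>
    rw [starRingEnd_apply, star_mulChar hι] at h
  · obtain ⟨k, hk⟩ := (IsHermitianField.odd F).add_one
    exact hs₂ (by rw [hk, pow_add, ← mul_pow, mul_eq_one_iff_inv_eq₀ hθ |>.mpr h, one_pow])
  · obtain ⟨m, rfl⟩ := Nat.exists_eq_add_of_le' (IsHermitianField.one_lt F).le
    rw [hτ, _root_.inv_inj, pow_succ, right_eq_mul₀ hθ] at h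
    exact hs₁ h

lemma hasUnitaryDisc_of_trace_principalSeries (hι : ∀ x, ι (star x) = star (ι x))
    (ha : θ (x₀ * star (x₀ : F)) ≠ 1) {z : M} (hz : z ≠ 0) (hτz : τ z = -z) :
    HasUnitaryDisc χ ((-1) ^ ((q ^ 3 + 1) * q ^ 3 / 2) * ι (q ^ (u + 1) * (z * star z))) := by
  have : CharZero M := algebraRat.charZero M
  have hq : (q : M) ≠ 0 := Nat.cast_ne_zero.mpr (IsHermitianField.one_lt F).ne_bot
  have hcard : Fintype.card (IsotropicLine F) = q ^ 3 + 1 := by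
    rw [Fintype.card_option, Fintype.card_eq_nat_card, IsHermitianField.card_prod_skewAdjoint F]
  have hv : v ≠ 0 := fun h ↦ pow_ne_zero u hq (by simp [← hB.mul_star, h])
  have hK := charField_eq_map_eqLocusField hχ hx₀ hs hτ hB
  have hdisc := hasUnitaryDisc_of_forall (n := IsotropicLine F) hι hK
    (d := q ^ (u + 1) * (z * star z)) (by rw [hχ, map_one, trace_one, map_natCast])
    fun R H hR hRτ hHτ hH hHH hinv ↦ ?_
  · rwa [hcard, Nat.add_sub_cancel] at hdisc
  obtain ⟨y, hy, hτy, hdet⟩ := exists_det_eq_mul_star (ρ := principalSeries θ)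
    (hcard ▸ (IsHermitianField.odd F).pow.add_one) (principalSeries_hasScalarCommutant ha)
    (conjTranspose_principalSeries_mul_self (star_mulChar hι θ)) hB.mul_principalSeries hB.map_eq
    hB.conjTranspose_mul_self (map_map_eq_self hs hτ) (map_star_of_isPrimitiveRoot hs hι hι τ) hz
    hτz (mul_ne_zero hz hv) (by rw [map_mul, hτz, mul_left_comm, hB.det_mul_map, neg_mul_neg])
    (fun g ↦ Matrix.ext (hRτ g)) (fun g ↦ ι.injective (by rw [← hR, hχ])) (Matrix.ext hHτ) hH hHH
    hinv
  refine ⟨y / q ^ 2, show τ _ = _ from ?_, div_ne_zero hy (pow_ne_zero 2 hq), ?_⟩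
  · simp [hτy]
  · rw [hdet, star_mul', star_div₀, star_pow, star_natCast]
    field_simp
    linear_combination star z * star y * q * hB.mul_star

end PrincipalSeriesCharacter

/-! ### Skew elements -/

section SkewElement

variable {M : Type} [Field M] {q : ℕ} {s : M}

open scoped Classical in
/-- For a root of unity `s` of order dividing `q ^ 2 - 1`, an element of `ℚ(s)` that both
`s ↦ s⁻¹` and `s ↦ s⁻ᵠ` negate. The factor `f(u)` of the unitary discriminant is its negated square
for `s = δ ^ u`. -/
def skewElement (q : ℕ) (s : M) : M :=
  if s ^ (q + 1) = -1 then s + s ^ q else s ^ (q + 1) - (s ^ (q + 1))⁻¹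

lemma map_skewElement {N : Type} [Field N] (σ : M →+* N) :
    σ (skewElement q s) = skewElement q (σ s) := by
  have hiff : σ s ^ (q + 1) = -1 ↔ s ^ (q + 1) = -1 := by
    rw [← map_pow, ← σ.injective.eq_iff, map_neg, map_one]
  by_cases h : s ^ (q + 1) = -1
  · rw [skewElement, skewElement, if_pos h, if_pos (hiff.mpr h), map_add, map_pow]
  · rw [skewElement, skewElement, if_neg h, if_neg (mt hiff.mp h), map_sub, map_inv₀, map_pow]

lemma skewElement_inv : skewElement q s⁻¹ = -skewElement q s := by
  have hiff : s⁻¹ ^ (q + 1) = -1 ↔ s ^ (q + 1) = -1 := by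
    rw [inv_pow, inv_eq_iff_eq_inv, inv_neg_one]
  by_cases h : s ^ (q + 1) = -1
  · rw [skewElement, skewElement, if_pos h, if_pos (hiff.mpr h), inv_pow,
      inv_eq_of_mul_eq_one_right (show s * -s ^ q = 1 by linear_combination -h),
      inv_eq_of_mul_eq_one_right (show s ^ q * -s = 1 by linear_combination -h),
      neg_add, add_comm]
  · rw [skewElement, skewElement, if_neg h, if_neg (mt hiff.mp h), inv_pow, _root_.inv_inv, neg_sub]

lemma skewElement_pow (hs : s ^ (q ^ 2 - 1) = 1) (hq : 1 ≤ q) :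
    skewElement q (s ^ q) = skewElement q s := by
  have hsq : (s ^ q) ^ q = s := by
    rw [← pow_mul, ← sq, ← Nat.sub_add_cancel (Nat.one_le_pow 2 q hq), pow_succ, hs, one_mul]
  rw [skewElement, skewElement, pow_succ (s ^ q), hsq, ← pow_succ', add_comm (s ^ q)]

lemma skewElement_ne_zero (hq : Odd q) (hs₀ : s ≠ 0) (hs : s ^ (q + 1) ≠ 1) :
    skewElement q s ≠ 0 := by
  rw [skewElement]
  split_ifs with h <;> intro h₀
  · have hsq : s ^ 2 = 1 := by linear_combination s * h₀ - h
    obtain ⟨k, hk⟩ := hq.add_one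
    exact hs (by rw [hk, ← two_mul, pow_mul, hsq, one_pow])
  · rw [sub_eq_zero, ← mul_eq_one_iff_eq_inv₀ (pow_ne_zero _ hs₀), mul_self_eq_one_iff] at h₀
    exact h₀.elim hs h

end SkewElement

/-! ### Complex principal series -/

lemma exists_ringHomComp_eq {F M N : Type} [Field F] [Finite F] [Field M] [Field N] {x₀ : Fˣ}
    (hx₀ : ∀ x, x ∈ Submonoid.powers x₀) (ι : M →+* N) {θ : MulChar F N} {s : M}
    (hs : ι s = θ x₀) : ∃ θ' : MulChar F M, θ'.ringHomComp ι = θ ∧ θ' x₀ = s := by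
  classical
  have := Fintype.ofFinite F
  have hzpowers (x : Fˣ) : x ∈ Subgroup.zpowers x₀ := mem_powers_iff_mem_zpowers.mp (hx₀ x)
  have hs₀ : s ≠ 0 := (map_ne_zero ι).mp (hs ▸ (x₀.isUnit.map θ).ne_zero)
  have hroot : Units.mk0 s hs₀ ∈ rootsOfUnity (Fintype.card Fˣ) M :=
    (mem_rootsOfUnity _ _).mpr <| Units.ext <| ι.injective <| by
      rw [Units.val_pow_eq_pow_val, Units.val_mk0, map_pow, hs, ← map_pow,
        ← Units.val_pow_eq_pow_val, pow_card_eq_one, Units.val_one, Units.val_one, map_one, map_one]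
  have hgen := MulChar.ofRootOfUnity_spec hroot hzpowers
  refine ⟨.ofRootOfUnity hroot hzpowers, (MulChar.eq_iff hzpowers _ _).mpr ?_, hgen⟩
  rw [MulChar.ringHomComp_apply, hgen, Units.val_mk0, hs]

section ComplexPrincipalSeries

open specialUnitary

variable {q : ℕ} {F : Type} [Field F] [StarRing F] [IsHermitianField q F] [Fintype F]
  [DecidableEq F] [Fintype (skewAdjoint F)] {θ : MulChar F ℂ}

lemma inducedChar_eq_trace_principalSeries {U : Subgroup (specialUnitary F)}
    (hU : ∀ g, g ∈ U ↔ (toMatrix g).BlockTriangular id) {ψ : U → ℂ}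
    (hψ : ∀ b : U, ψ b = θ (toMatrix b.1 0 0)) :
    inducedChar U ψ = fun g ↦ (principalSeries θ g).trace := by
  have := MulAction.isPretransitive_of_is_two_pretransitive (G := specialUnitary F)
    (α := IsotropicLine F)
  have hstab : MulAction.stabilizer _ (none : IsotropicLine F) = U :=
    Subgroup.ext fun g ↦ mem_stabilizer_none_iff.trans (hU g).symm
  refine MonomialCocycle.inducedChar_eq_trace_rep _ none U hstab ψ fun b ↦ ?_
  rw [hψ, factorCocycle_map_apply, factor_none (MulAction.mem_stabilizer_iff.mp (hstab ▸ b.2))]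

lemma isIrrChar_trace_principalSeries {a : Fˣ} (ha : θ (a * star (a : F)) ≠ 1) :
    IsIrrChar fun g ↦ (principalSeries θ g).trace :=
  isIrrChar_of_hasScalarCommutant (principalSeries_hasScalarCommutant ha)

lemma trace_principalSeries_one : (principalSeries θ 1).trace = (q : ℂ) ^ 3 + 1 := by
  rw [map_one, trace_one, Fintype.card_option, Fintype.card_eq_nat_card,
    IsHermitianField.card_prod_skewAdjoint F]
  push_cast
  rfl

lemma notReal_and_hasUnitaryDisc_of_isPrimitiveRoot {M : Type} [Field M] [Algebra ℚ M] {d : ℕ}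
    [NeZero d] [IsCyclotomicExtension {d} ℚ M] (ι : M →+* ℂ) {θ : MulChar F M} {x₀ : Fˣ}
    (hx₀ : ∀ x, x ∈ Submonoid.powers x₀) (hs : IsPrimitiveRoot (θ x₀) d)
    (hs₁ : θ x₀ ^ (q - 1) ≠ 1) (hs₂ : θ x₀ ^ (q + 1) ≠ 1) {u : ℕ} (hu : θ (-1) = (-1) ^ u)
    {χ : specialUnitary F → ℂ} (hχ : ∀ g, χ g = ι (principalSeries θ g).trace) :
    NotReal χ ∧ HasUnitaryDisc χ
      ((-1) ^ ((q ^ 3 + 1) * q ^ 3 / 2) * (q ^ (u + 1) * -skewElement q (ι (θ x₀)) ^ 2)) := by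
  obtain ⟨p, _⟩ := CharP.exists F
  have : Fact p.Prime := ⟨CharP.char_is_prime F p⟩
  have : CharZero M := algebraRat.charZero M
  have hq := (IsHermitianField.one_lt F).le
  have hs₀ : θ x₀ ^ (q ^ 2 - 1) = 1 := mulChar_pow_sq_sub_one θ x₀
  have ha : θ (x₀ * star (x₀ : F)) ≠ 1 := by
    rwa [IsHermitianField.star_eq_pow, ← pow_succ', map_pow]
  obtain ⟨_, hι⟩ := exists_starRing hs ι
  obtain ⟨τ, hτ⟩ := exists_ringHom_apply_eq hs (hs.pow_of_coprime q <| Nat.Coprime.coprime_dvd_left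
    (dvd_pow_self q two_ne_zero) (coprime_sq_of_dvd_sq_sub_one (hs.dvd_of_pow_eq_one _ hs₀) hq)).inv
  obtain ⟨B, v, hB⟩ := exists_isUnitaryIntertwiner_of_isPrimitiveRoot hx₀ hs (p := p) hι hτ ha hu
  refine ⟨notReal_of_trace_principalSeries hχ hx₀ hs hτ hB hι hs₁ hs₂, ?_⟩
  have hz : skewElement q (θ x₀) ≠ 0 :=
    skewElement_ne_zero (IsHermitianField.odd F) (hs.ne_zero (NeZero.ne d)) hs₂
  have hτz : τ (skewElement q (θ x₀)) = -skewElement q (θ x₀) := by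
    rw [map_skewElement, hτ, skewElement_inv, skewElement_pow hs₀ hq]
  have hstar : star (skewElement q (θ x₀)) = -skewElement q (θ x₀) := by
    rw [← starRingEnd_apply, map_skewElement, starRingEnd_apply, star_mulChar hι, skewElement_inv]
  convert hasUnitaryDisc_of_trace_principalSeries hχ hx₀ hs hτ hB hι ha hz hτz using 2
  rw [hstar, ← map_skewElement, map_mul, map_mul, map_neg, map_pow, map_natCast]
  ring

theorem notReal_and_hasUnitaryDisc_trace_principalSeries {x₀ : Fˣ}
    (hx₀ : ∀ x, x ∈ Submonoid.powers x₀) (hs₁ : θ x₀ ^ (q - 1) ≠ 1) (hs₂ : θ x₀ ^ (q + 1) ≠ 1)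
    {u : ℕ} (hu : θ (-1) = (-1) ^ u) :
    NotReal (fun g ↦ (principalSeries θ g).trace) ∧
      HasUnitaryDisc (fun g ↦ (principalSeries θ g).trace)
        ((-1) ^ ((q ^ 3 + 1) * q ^ 3 / 2) * (q ^ (u + 1) * -skewElement q (θ x₀) ^ 2)) := by
  have hfin : IsOfFinOrder (x₀ : F) := x₀.isOfFinOrder_val.mpr (isOfFinOrder_of_finite x₀)
  have : NeZero (orderOf (θ x₀)) := ⟨(θ.toMonoidHom.isOfFinOrder hfin).orderOf_pos.ne'⟩
  have : NeZero ((orderOf (θ x₀) : ℕ) : ℚ) := NeZero.charZero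
  let M := CyclotomicField (orderOf (θ x₀)) ℚ
  have : IsCyclotomicExtension {orderOf (θ x₀)} ℚ M := CyclotomicField.isCyclotomicExtension _ _
  have hζ := IsCyclotomicExtension.zeta_spec (orderOf (θ x₀)) ℚ M
  obtain ⟨ι, hιζ⟩ := exists_ringHom_apply_eq hζ (IsPrimitiveRoot.orderOf (θ x₀))
  obtain ⟨θ', hθ, hθ'⟩ := exists_ringHomComp_eq hx₀ ι hιζ
  have hpow {n : ℕ} (hn : θ x₀ ^ n ≠ 1) : θ' x₀ ^ n ≠ 1 := fun h ↦ hn <| by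
    rw [← hιζ, ← hθ', ← map_pow, h, map_one]
  have hu' : θ' (-1) = (-1) ^ u := ι.injective <| by
    rw [← MulChar.ringHomComp_apply, hθ, hu, map_pow, map_neg, map_one]
  rw [← hιζ, ← hθ']
  exact notReal_and_hasUnitaryDisc_of_isPrimitiveRoot ι hx₀ (hθ' ▸ hζ) (hpow hs₁) (hpow hs₂) hu'
    fun g ↦ (congrArg (fun ω ↦ (principalSeries ω g).trace) hθ).symm.trans
      (trace_principalSeries_ringHomComp ι g)

omit [Fintype F] [DecidableEq F] [Fintype (skewAdjoint F)] in
theorem isIrrChar_and_hasUnitaryDisc_inducedChar {U : Subgroup (specialUnitary F)}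
    (hU : ∀ g, g ∈ U ↔ (toMatrix g).BlockTriangular id) {ψ : U → ℂ}
    (hψ : ∀ b : U, ψ b = θ (toMatrix b.1 0 0)) {x₀ : Fˣ} (hx₀ : ∀ x, x ∈ Submonoid.powers x₀)
    (hs₁ : θ x₀ ^ (q - 1) ≠ 1) (hs₂ : θ x₀ ^ (q + 1) ≠ 1) {u : ℕ} (hu : θ (-1) = (-1) ^ u) :
    IsIrrChar (inducedChar U ψ) ∧ inducedChar U ψ 1 = (q : ℂ) ^ 3 + 1 ∧
      NotReal (inducedChar U ψ) ∧ HasUnitaryDisc (inducedChar U ψ)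
        ((-1) ^ ((q ^ 3 + 1) * q ^ 3 / 2) * (q ^ (u + 1) * -skewElement q (θ x₀) ^ 2)) := by
  classical
  have := Fintype.ofFinite F
  have ha : θ (x₀ * star (x₀ : F)) ≠ 1 := by
    rwa [IsHermitianField.star_eq_pow, ← pow_succ', map_pow]
  rw [inducedChar_eq_trace_principalSeries hU hψ]
  exact ⟨isIrrChar_trace_principalSeries ha, trace_principalSeries_one,
    notReal_and_hasUnitaryDisc_trace_principalSeries hx₀ hs₁ hs₂ hu⟩

end ComplexPrincipalSeries

/-! ### Roots of unity and signs -/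

lemma pow_pow_eq_one_iff {M : Type} [CommMonoid M] {ζ : M} {m n : ℕ}
    (hζ : IsPrimitiveRoot ζ (m * n)) (hn : 0 < n) (u : ℕ) : (ζ ^ u) ^ n = 1 ↔ m ∣ u := by
  rw [← pow_mul, hζ.pow_eq_one_iff_dvd, Nat.mul_dvd_mul_iff_right hn]

lemma neg_one_pow_triangle_of_mod_four_eq_one {n : ℕ} (hn : n % 4 = 1) :
    (-1 : ℂ) ^ ((n + 1) * n / 2) = -1 := by
  obtain ⟨m, rfl⟩ : ∃ m, n = 4 * m + 1 := ⟨n / 4, by lia⟩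
  rw [show (4 * m + 1 + 1) * (4 * m + 1) = 2 * ((2 * m + 1) * (4 * m + 1)) by ring,
    Nat.mul_div_cancel_left _ two_pos]
  exact ((odd_two_mul_add_one m).mul (by grind)).neg_one_pow

lemma neg_one_pow_triangle_of_mod_four_eq_three {n : ℕ} (hn : n % 4 = 3) :
    (-1 : ℂ) ^ ((n + 1) * n / 2) = 1 := by
  obtain ⟨m, rfl⟩ : ∃ m, n = 4 * m + 3 := ⟨n / 4, by lia⟩
  rw [show (4 * m + 3 + 1) * (4 * m + 3) = 2 * (2 * ((m + 1) * (4 * m + 3))) by ring,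
    Nat.mul_div_cancel_left _ two_pos]
  exact (even_two_mul _).neg_one_pow

lemma neg_sq_skewElement_eq_ite {q : ℕ} (hq : Odd q) {δ : ℂ}
    (hδ : IsPrimitiveRoot δ (q ^ 2 - 1)) {u : ℕ} (hu : (δ ^ u) ^ (q + 1) ≠ 1) :
    -skewElement q (δ ^ u) ^ 2 = if (q - 1) / 2 ∣ u
      then -(δ ^ (u : ℤ) + δ ^ ((q * u : ℕ) : ℤ)) ^ 2
      else -(δ ^ (((q + 1) * u : ℕ) : ℤ) - δ ^ (-(((q + 1) * u : ℕ) : ℤ))) ^ 2 := by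
  obtain ⟨h, rfl⟩ := hq
  rw [Nat.add_sub_cancel, Nat.mul_div_cancel_left _ two_pos]
  have hM : (2 * h + 1) ^ 2 - 1 = h * ((2 * h + 1 + 1) * 2) := Nat.sub_eq_of_eq_add (by ring)
  have hiff : (δ ^ u) ^ (2 * h + 1 + 1) = -1 ↔ h ∣ u := by
    rw [← pow_pow_eq_one_iff (hM ▸ hδ) (by positivity) u, pow_mul _ _ 2,
      sq_eq_one_iff, or_iff_right hu]
  rw [skewElement]
  split_ifs with h₁ h₂ h₂
  · simp only [zpow_natCast, ← pow_mul, mul_comm u]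
  · exact absurd (hiff.mp h₁) h₂
  · exact absurd (hiff.mpr h₂) h₁
  · simp only [_root_.zpow_neg, zpow_natCast, ← pow_mul, mul_comm u]

/-! ### The Frobenius involution -/

section Frobenius

variable (p k : ℕ) (F : Type) [Field F] [Fintype F] [ExpChar F p]

/-- The Frobenius map `x ↦ x ^ (p ^ k)` as the involution of a field with `(p ^ k) ^ 2` elements. -/
abbrev frobeniusStarRing (hF : Fintype.card F = (p ^ k) ^ 2) : StarRing F where
  star := iterateFrobenius F p k
  star_involutive x := by
    rw [iterateFrobenius_def, iterateFrobenius_def, ← pow_mul, ← sq, ← hF, FiniteField.pow_card]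
  star_mul x y := (map_mul _ x y).trans (mul_comm _ _)
  star_add := map_add _

lemma isHermitianField_frobeniusStarRing (hp : Odd p) (hF : Fintype.card F = (p ^ k) ^ 2) :
    letI := frobeniusStarRing p k F hF
    IsHermitianField (p ^ k) F :=
  letI := frobeniusStarRing p k F hF
  { finite := inferInstance
    odd := hp.pow
    card_eq := Nat.card_eq_fintype_card.trans hF
    star_eq_pow := iterateFrobenius_def p k }

end Frobenius

lemma isPrimitiveRoot_exp_sq_sub_one {q : ℕ} (hq : 1 < q) :
    IsPrimitiveRoot (Complex.exp (2 * Real.pi * Complex.I / ((q : ℂ) ^ 2 - 1))) (q ^ 2 - 1) := by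
  have hsq : 1 < q ^ 2 := Nat.one_lt_pow two_ne_zero hq
  have := Complex.isPrimitiveRoot_exp (q ^ 2 - 1) (Nat.sub_pos_of_lt hsq).ne'
  rwa [Nat.cast_sub hsq.le, Nat.cast_pow, Nat.cast_one] at this

lemma exists_generator_map_eq {G : Type} [Group G] [Finite G] {N : Type} [Field N] {δ : N}
    {ν : G →* Nˣ} (hinj : Function.Injective ν) (hpow : ∀ x, ∃ m : ℤ, (ν x : N) = δ ^ m)
    (hsurj : ∀ m : ℤ, ∃ x, (ν x : N) = δ ^ m) :
    ∃ x₀, (ν x₀ : N) = δ ∧ ∀ x, x ∈ Submonoid.powers x₀ := by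
  obtain ⟨x₀, hx₀⟩ := hsurj 1
  rw [zpow_one] at hx₀
  refine ⟨x₀, hx₀, fun x ↦ mem_powers_iff_mem_zpowers.mpr ?_⟩
  obtain ⟨m, hm⟩ := hpow x
  exact ⟨m, hinj (Units.ext (by rw [hm, ← hx₀, map_zpow, Units.val_zpow_eq_zpow_val]))⟩

lemma ofUnitHom_pow_coe {F N : Type} [Field F] [Field N] (ν : Fˣ →* Nˣ) (u : ℕ) (x : Fˣ) :
    MulChar.ofUnitHom (ν ^ u) x = (ν x : N) ^ u := by
  rw [MulChar.ofUnitHom_coe, MonoidHom.pow_apply, Units.val_pow_eq_pow_val]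

lemma map_neg_one_of_injective {F N : Type} [Field F] [NeZero (2 : F)] [Field N] {ν : Fˣ →* Nˣ}
    (hν : Function.Injective ν) : ν (-1) = -1 := by
  have hsq : (ν (-1) : N) ^ 2 = 1 := by
    rw [← Units.val_pow_eq_pow_val, ← map_pow, neg_one_sq, map_one, Units.val_one]
  refine Units.ext ((sq_eq_one_iff.mp hsq).resolve_left fun h ↦ two_ne_zero (α := F) ?_)
  have := congrArg Units.val (hν ((Units.ext h).trans (map_one ν).symm))
  rw [Units.val_neg, Units.val_one] at this
  linear_combination -this

lemma ofUnitHom_pow_neg_one {F N : Type} [Field F] [NeZero (2 : F)] [Field N] {ν : Fˣ →* Nˣ}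
    (hν : Function.Injective ν) (u : ℕ) : MulChar.ofUnitHom (ν ^ u) (-1) = (-1) ^ u := by
  rw [← Units.val_one, ← Units.val_neg, ofUnitHom_pow_coe, map_neg_one_of_injective hν,
    Units.val_neg, Units.val_one]

/-- the unitary discriminants of the characters of `SU₃(q)`, `q` odd,
induced from the linear characters `θ_u : g ↦ ν(g₁₁)^u` of the Borel subgroup,
where `ν` is an isomorphism from `F_{q²}ˣ` onto the group generated by
`δ = exp(2πi/(q²-1))`. -/
theorem stmt16 (p k q : ℕ) (hp : p.Prime) (hpodd : Odd p) (hk : 0 < k) (hq : q = p ^ k)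
    (F : Type) [Field F] [Fintype F] [ExpChar F p] (hF : Fintype.card F = q ^ 2)
    (u : ℕ) (hu1 : 1 ≤ u) (hu2 : u < q ^ 2 - 1)
    (hnd1 : ¬ (q - 1) ∣ u) (hnd2 : ¬ (q + 1) ∣ u)
    (δ : ℂ) (hδ : δ = Complex.exp (2 * Real.pi * Complex.I / ((q : ℂ) ^ 2 - 1)))
    (ν : Fˣ →* ℂˣ) (hνinj : Function.Injective ν)
    (hνpow : ∀ x : Fˣ, ∃ m : ℤ, ((ν x : ℂˣ) : ℂ) = δ ^ m)
    (hνsurj : ∀ m : ℤ, ∃ x : Fˣ, ((ν x : ℂˣ) : ℂ) = δ ^ m)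
    (θ : ↥(Borel p k F) → ℂ)
    (hθ : ∀ g : ↥(Borel p k F), ∃ x : Fˣ,
      (x : F) = (((g : ↥(SU3 p k F)) : Matrix.SpecialLinearGroup (Fin 3) F) :
        Matrix (Fin 3) (Fin 3) F) 0 0 ∧ θ g = ((ν x : ℂˣ) : ℂ) ^ u)
    (χ : ↥(SU3 p k F) → ℂ) (hχ : χ = inducedChar (Borel p k F) θ)
    (f : ℂ)
    (hf : f = if ((q - 1) / 2 : ℕ) ∣ u
      then -(δ ^ (u : ℤ) + δ ^ ((q * u : ℕ) : ℤ)) ^ 2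
      else -(δ ^ (((q + 1) * u : ℕ) : ℤ) - δ ^ (-(((q + 1) * u : ℕ) : ℤ))) ^ 2) :
    IsIrrChar χ ∧ χ 1 = (q : ℂ) ^ 3 + 1 ∧ NotReal χ ∧
    (q % 4 = 1 → HasUnitaryDisc χ (-(q : ℂ) ^ (u + 1) * f)) ∧
    (q % 4 = 3 → HasUnitaryDisc χ ((q : ℂ) ^ (u + 1) * f)) := by
  subst hq hχ
  let _ := frobeniusStarRing p k F hF
  have hFq := isHermitianField_frobeniusStarRing p k F hpodd hF
  have hδu : IsPrimitiveRoot δ ((p ^ k) ^ 2 - 1) := hδ ▸ isPrimitiveRoot_exp_sq_sub_one hFq.one_lt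
  have hsq : (p ^ k) ^ 2 - 1 = (p ^ k + 1) * (p ^ k - 1) := Nat.sq_sub_sq (p ^ k) 1
  have hs₁ : (δ ^ u) ^ (p ^ k - 1) ≠ 1 :=
    (pow_pow_eq_one_iff (hsq ▸ hδu) (Nat.sub_pos_of_lt hFq.one_lt) u).not.mpr hnd2
  have hs₂ : (δ ^ u) ^ (p ^ k + 1) ≠ 1 :=
    (pow_pow_eq_one_iff (mul_comm _ (p ^ k + 1) ▸ hsq ▸ hδu) (Nat.succ_pos _) u).not.mpr hnd1
  obtain ⟨x₀, hx₀, hgen⟩ := exists_generator_map_eq hνinj hνpow hνsurj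
  let ω := MulChar.ofUnitHom (ν ^ u)
  have hω : ω x₀ = δ ^ u := by rw [ofUnitHom_pow_coe, hx₀]
  have hωθ (b : Borel p k F) : θ b = ω (b.1.1.1 0 0) := by
    obtain ⟨x, hx, hθx⟩ := hθ b
    rw [hθx, ← hx, ofUnitHom_pow_coe]
  -- For this involution `SU3 p k F` is definitionally equal to `specialUnitary F`.
  obtain ⟨hirr, hdeg, hreal, hdisc⟩ := isIrrChar_and_hasUnitaryDisc_inducedChar
    (U := Borel p k F) (fun _ ↦ Iff.rfl) hωθ hgen (hω ▸ hs₁) (hω ▸ hs₂)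
    (ofUnitHom_pow_neg_one hνinj u)
  rw [hω, neg_sq_skewElement_eq_ite hFq.odd hδu hs₂, ← hf] at hdisc
  refine ⟨hirr, hdeg, hreal, fun h ↦ ?_, fun h ↦ ?_⟩
  · rwa [neg_one_pow_triangle_of_mod_four_eq_one (by simp [Nat.pow_mod, h]), ← mul_assoc,
      neg_one_mul] at hdisc
  · rwa [neg_one_pow_triangle_of_mod_four_eq_three (by simp [Nat.pow_mod, h]), one_mul] at hdisc

end Paper
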